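/- No configuration of at most seven shortcuts achieves diameter smaller than π/2 + 1: every finite set S of shortcuts with |S| ≤ 7 satisfies diam(S) ≥ π/2 + 1. Consequently diam(7) = diam(6) = π/2 + 1. -/

import Mathlib

/-!
Fix `D = π / 2 + 1` and suppose that seven chords connect all pairs of points by walks shorter than
`D`. For points at arc distance `d ∈ [D, π]`, a walk of fewest chords among these uses some chord,
and every chord at most once. Charging the pair to one of the chords used, `s`, bounds the detour
to its two endpoints by `D - |s|` plus the savings (spanned angle minus length) of the other chords
used; hence the midpoint of the pair lies in one of two arcs centred at the middle of `s` and at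
its antipode. As the midpoints fill the whole circle, the lengths of all these arcs add up to at
least `2 * π`. For suitable `d` and a suitable rule for choosing the charged chord, this is
impossible, unless the long chords are almost diameters and a single chord is short. In that case
pairs with a point near the middle of the arc cut off by the short chord gain nothing from it and
are served by two other chords, whose arcs therefore overlap the arc of the short chord; the sum of
the lengths has to make up for this overlap, which it cannot.

Conversely, six or seven equally spaced diameters suffice: between two points there are two walks
along a given diameter, and some diameter makes the shorter one at most `π / 2 + 1`.
-/

open Real MeasureTheory

/-- Arc distance between points on the unit circle, given by their polar angles:
the length of the shorter arc between them. -/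
noncomputable def arcDist (p q : ℝ) : ℝ := ⨅ n : ℤ, |p - q + 2 * π * n|

/-- Euclidean length of the chord between the circle points with angles `u` and `v`. -/
noncomputable def chordLen (u v : ℝ) : ℝ := 2 * Real.sin (arcDist u v / 2)

/-- A pair of angles is a genuine shortcut (chord) if its endpoints are distinct points. -/
def IsShortcut (s : ℝ × ℝ) : Prop := arcDist s.1 s.2 ≠ 0

/-- δ(a) = arcsin(a/2) - a/2. -/
noncomputable def sdelta (a : ℝ) : ℝ := Real.arcsin (a / 2) - a / 2

/-- Cost of a path that starts at `p`, fully traverses the listed chords in order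
(travelling along the circle in between), and ends at `q`. -/
noncomputable def walkCost (q : ℝ) : ℝ → List (ℝ × ℝ) → ℝ
  | p, [] => arcDist p q
  | p, e :: L => arcDist p e.1 + chordLen e.1 e.2 + walkCost q e.2 L

/-- Shortest-path distance from `p` to `q` using the shortcuts of `S`
(each usable in either orientation, and always traversed completely). -/
noncomputable def dS (S : Finset (ℝ × ℝ)) (p q : ℝ) : ℝ :=
  sInf {c | ∃ L : List (ℝ × ℝ), (∀ e ∈ L, e ∈ S ∨ (e.2, e.1) ∈ S) ∧ c = walkCost q p L}

/-- Diameter of the circle augmented with the shortcuts of `S`. -/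
noncomputable def diamS (S : Finset (ℝ × ℝ)) : ℝ :=
  sSup {d | ∃ p q : ℝ, d = dS S p q}

/-- diam(k): the optimal diameter achievable with `k` shortcuts. -/
noncomputable def diamK (k : ℕ) : ℝ :=
  sInf {d | ∃ S : Finset (ℝ × ℝ), S.card = k ∧ (∀ s ∈ S, IsShortcut s) ∧ d = diamS S}

/-- Distance from `p` to `q` when a single shortcut with endpoints `u`, `v` is available. -/
noncomputable def dOne (u v p q : ℝ) : ℝ :=
  min (arcDist p q)
    (min (arcDist p u + chordLen u v + arcDist v q)
      (arcDist p v + chordLen u v + arcDist u q))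

/-- Two angles represent the same point of the circle. -/
def SamePoint (p q : ℝ) : Prop := arcDist p q = 0

/-- Two pairs of angles represent the same chord of the circle. -/
def SameChord (s t : ℝ × ℝ) : Prop :=
  (SamePoint s.1 t.1 ∧ SamePoint s.2 t.2) ∨ (SamePoint s.1 t.2 ∧ SamePoint s.2 t.1)

/-- `p` lies in the deep umbra of the shortcut from `u` to `u + β`
(where `0 < β ≤ π` is the counterclockwise arc spanned by the shortcut):
`p` lies in the inner umbra, and `|p u'| + |s| ≥ d(p, v')` where `u'` is the
endpoint closer to `p` and `v'` the other one. -/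
def InDeepUmbra (u β p : ℝ) : Prop :=
  (∃ t : ℝ, sdelta (chordLen u (u + β)) ≤ t ∧ t ≤ β - sdelta (chordLen u (u + β)) ∧
    arcDist p (u + t) = 0) ∧
  (arcDist p u ≤ arcDist p (u + β) →
    arcDist p (u + β) ≤ chordLen p u + chordLen u (u + β)) ∧
  (arcDist p (u + β) ≤ arcDist p u →
    arcDist p u ≤ chordLen p (u + β) + chordLen u (u + β))

/-- `d` equals δ*_k : for `k ∈ {3,4,5}` this is `δ(a*_k)` where `a*_k + δ(a*_k) = (k-1)π/k`,
and for `k = 6` it is `δ(2) = π/2 - 1`. -/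
def dstarSpec (k : ℕ) (d : ℝ) : Prop :=
  (k = 6 ∧ d = sdelta 2) ∨
    (∃ a, a ∈ Set.Icc (0 : ℝ) 2 ∧ a + sdelta a = ((k : ℝ) - 1) * π / k ∧ d = sdelta a)

/-! ## The arc distance -/

section ArcDist

lemma arcDist_le_abs_add (x y : ℝ) (n : ℤ) : arcDist x y ≤ |x - y + 2 * π * n| :=
  ciInf_le ⟨0, by rintro _ ⟨m, rfl⟩; exact abs_nonneg _⟩ n

lemma arcDist_le_abs_sub (x y : ℝ) : arcDist x y ≤ |x - y| := by
  simpa using arcDist_le_abs_add x y 0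

lemma norm_coe_sub_addCircle (x y : ℝ) :
    ‖((x - y : ℝ) : AddCircle (2 * π))‖ =
      |x - y + 2 * π * (-round ((2 * π)⁻¹ * (x - y)) : ℤ)| := by
  rw [AddCircle.norm_eq]
  push_cast
  ring_nf

lemma arcDist_eq_dist (x y : ℝ) :
    arcDist x y = dist (x : AddCircle (2 * π)) (y : AddCircle (2 * π)) := by
  rw [dist_eq_norm, ← AddCircle.coe_sub]
  refine le_antisymm (norm_coe_sub_addCircle x y ▸ arcDist_le_abs_add x y _) (le_ciInf fun n => ?_)
  have h : ((2 * π * n : ℝ) : AddCircle (2 * π)) = 0 :=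
    (AddCircle.coe_eq_zero_iff _).2 ⟨n, by simp [mul_comm]⟩
  simpa only [AddCircle.coe_add, h, add_zero, norm_eq_abs] using
    QuotientAddGroup.norm_mk_le_norm (S := AddSubgroup.zmultiples (2 * π))
      (m := x - y + 2 * π * n)

lemma exists_int_arcDist_eq (x y : ℝ) : ∃ n : ℤ, arcDist x y = |x - y + 2 * π * n| := by
  rw [arcDist_eq_dist, dist_eq_norm, ← AddCircle.coe_sub]
  exact ⟨_, norm_coe_sub_addCircle x y⟩

lemma arcDist_nonneg (x y : ℝ) : 0 ≤ arcDist x y := by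
  rw [arcDist_eq_dist]
  exact dist_nonneg

lemma arcDist_comm (x y : ℝ) : arcDist x y = arcDist y x := by
  rw [arcDist_eq_dist, arcDist_eq_dist, dist_comm]

lemma arcDist_triangle (x y z : ℝ) : arcDist x z ≤ arcDist x y + arcDist y z := by
  simpa only [arcDist_eq_dist] using dist_triangle (x : AddCircle (2 * π)) y z

lemma arcDist_le_pi (x y : ℝ) : arcDist x y ≤ π := by
  rw [arcDist_eq_dist, dist_eq_norm]
  simpa [abs_of_pos pi_pos] using
    AddCircle.norm_le_half_period (2 * π) (x := (x : AddCircle (2 * π)) - y) two_pi_pos.ne'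

lemma arcDist_eq_abs_sub {x y : ℝ} (h : |x - y| ≤ π) : arcDist x y = |x - y| := by
  rw [arcDist_eq_dist, dist_eq_norm, ← AddCircle.coe_sub,
    AddCircle.norm_coe_eq_abs_iff (2 * π) two_pi_pos.ne']
  simpa [abs_of_pos pi_pos] using h

lemma le_arcDist {x y t : ℝ} (h₁ : t ≤ x - y) (h₂ : x - y ≤ 2 * π - t) : t ≤ arcDist x y := by
  refine le_ciInf fun n => ?_
  rcases le_or_gt 0 n with hn | hn
  · have : (0 : ℝ) ≤ n := mod_cast hn
    exact le_abs.2 (.inl (by nlinarith [pi_pos]))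
  · have : (n : ℝ) ≤ -1 := mod_cast Int.le_sub_one_of_lt hn
    exact le_abs.2 (.inr (by nlinarith [pi_pos]))

lemma samePoint_iff_coe_eq {x y : ℝ} :
    SamePoint x y ↔ (x : AddCircle (2 * π)) = (y : AddCircle (2 * π)) := by
  rw [SamePoint, arcDist_eq_dist, dist_eq_zero]

lemma samePoint_of_eq_add {x y : ℝ} (n : ℤ) (h : x = y + 2 * π * n) : SamePoint x y := by
  refine le_antisymm ((arcDist_le_abs_add x y (-n)).trans_eq ?_) (arcDist_nonneg x y)
  rw [h, abs_eq_zero]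
  push_cast
  ring

lemma SamePoint.arcDist_left {x y : ℝ} (h : SamePoint x y) (z : ℝ) :
    arcDist x z = arcDist y z := by
  rw [arcDist_eq_dist, arcDist_eq_dist, samePoint_iff_coe_eq.1 h]

lemma SamePoint.arcDist_right {x y : ℝ} (h : SamePoint x y) (z : ℝ) :
    arcDist z x = arcDist z y := by
  rw [arcDist_comm z x, arcDist_comm z y, h.arcDist_left]

end ArcDist

/-! ## Walks through a list of chords -/

section Walk

lemma chordLen_nonneg (x y : ℝ) : 0 ≤ chordLen x y := by
  have h := arcDist_nonneg x y
  have := sin_nonneg_of_nonneg_of_le_pi (x := arcDist x y / 2) (by linarith)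
    (by linarith [arcDist_le_pi x y, pi_pos])
  unfold chordLen
  linarith

lemma chordLen_comm (x y : ℝ) : chordLen x y = chordLen y x := by
  rw [chordLen, chordLen, arcDist_comm]

variable (p q r : ℝ) (e : ℝ × ℝ) (L L₁ L₂ : List (ℝ × ℝ))

lemma walkCost_append_cons :
    walkCost q p (L₁ ++ e :: L₂) =
      walkCost e.1 p L₁ + chordLen e.1 e.2 + walkCost q e.2 L₂ := by
  induction L₁ generalizing p with
  | nil => rfl
  | cons f L ih => simp only [List.cons_append, walkCost, ih]; ring

lemma walkCost_le_arcDist_add : walkCost q p L ≤ arcDist p r + walkCost q r L := by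
  cases L with
  | nil => exact arcDist_triangle p r q
  | cons e L => simp only [walkCost]; linarith [arcDist_triangle p r e.1]

lemma walkCost_append_le : walkCost q p (L₁ ++ L₂) ≤ walkCost r p L₁ + walkCost q r L₂ := by
  induction L₁ generalizing p with
  | nil => exact walkCost_le_arcDist_add p q r L₂
  | cons f L ih => simp only [List.cons_append, walkCost]; linarith [ih f.2]

lemma sum_chordLen_le_walkCost : (L.map fun e => chordLen e.1 e.2).sum ≤ walkCost q p L := by
  induction L generalizing p with
  | nil => exact arcDist_nonneg p q
  | cons e L ih =>
    simp only [walkCost, List.map_cons, List.sum_cons]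
    linarith [ih e.2, arcDist_nonneg p e.1]

lemma walkCost_nonneg : 0 ≤ walkCost q p L :=
  (List.sum_nonneg (List.forall_mem_map.2 fun e _ => chordLen_nonneg e.1 e.2)).trans
    (sum_chordLen_le_walkCost p q L)

lemma arcDist_le_walkCost_add_sum :
    arcDist p q ≤ walkCost q p L + (L.map fun e => arcDist e.1 e.2 - chordLen e.1 e.2).sum := by
  induction L generalizing p with
  | nil => simp [walkCost]
  | cons e L ih =>
    simp only [walkCost, List.map_cons, List.sum_cons]
    linarith [ih e.2, arcDist_triangle p e.1 q, arcDist_triangle e.1 e.2 q]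

end Walk

/-! ## Families of chords -/

/-- A family of chords of the unit circle, the `i`-th one joining the points of polar angles
`mid i - halfAngle i` and `mid i + halfAngle i`. Degenerate chords and diameters are allowed. -/
structure ChordFamily (ι : Type*) where
  mid : ι → ℝ
  halfAngle : ι → ℝ
  halfAngle_nonneg : ∀ i, 0 ≤ halfAngle i
  halfAngle_le : ∀ i, halfAngle i ≤ π / 2

namespace ChordFamily

variable {ι : Type*} (C : ChordFamily ι)

/-- The endpoint at which the shorter arc cut off by a chord starts. -/
def left (i : ι) : ℝ := C.mid i - C.halfAngle i

/-- The endpoint at which the shorter arc cut off by a chord ends. -/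
def right (i : ι) : ℝ := C.mid i + C.halfAngle i

/-- The Euclidean length of a chord. -/
noncomputable def length (i : ι) : ℝ := 2 * sin (C.halfAngle i)

/-- By how much a chord is shorter than the arc it cuts off; twice the quantity `δ` of the
paper. -/
noncomputable def saving (i : ι) : ℝ := 2 * (C.halfAngle i - sin (C.halfAngle i))

/-- The `i`-th chord as a directed edge, from left to right if the flag is `true`. -/
def edge (e : ι × Bool) : ℝ × ℝ :=
  if e.2 then (C.left e.1, C.right e.1) else (C.right e.1, C.left e.1)

/-- The circle augmented with the chords of `C` has all distances smaller than `D`. -/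
def DiamLT (D : ℝ) : Prop :=
  ∀ p q, ∃ L : List (ι × Bool), walkCost q p (L.map C.edge) < D

/-- Some walk of length less than `D` from `p` to `q` could consist of the `i`-th chord, if this
chord had length `D - R`. -/
def Covers (i : ι) (R p q : ℝ) : Prop :=
  arcDist p (C.left i) + arcDist q (C.right i) < R ∨
    arcDist p (C.right i) + arcDist q (C.left i) < R

/-- The point `p` lies on the shorter arc cut off by the `i`-th chord, so close to its middle that
this chord does not shorten the way to either endpoint: the inner umbra of the paper. -/
def InInnerUmbra (i : ι) (p : ℝ) : Prop :=
  C.saving i / 2 ≤ arcDist p (C.left i) ∧ C.saving i / 2 ≤ arcDist p (C.right i) ∧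
    arcDist p (C.left i) + arcDist p (C.right i) ≤ 2 * C.halfAngle i

lemma length_nonneg (i : ι) : 0 ≤ C.length i :=
  mul_nonneg zero_le_two <| sin_nonneg_of_nonneg_of_le_pi (C.halfAngle_nonneg i)
    (by linarith [C.halfAngle_le i, pi_pos])

lemma length_le_two (i : ι) : C.length i ≤ 2 := by
  unfold length
  linarith [sin_le_one (C.halfAngle i)]

lemma saving_nonneg (i : ι) : 0 ≤ C.saving i := by
  unfold saving
  linarith [sin_le (C.halfAngle_nonneg i)]

lemma length_add_saving (i : ι) : C.length i + C.saving i = 2 * C.halfAngle i := by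
  unfold length saving
  ring

lemma arcDist_left_right (i : ι) : arcDist (C.left i) (C.right i) = 2 * C.halfAngle i := by
  have h : |C.left i - C.right i| = 2 * C.halfAngle i := by
    rw [abs_sub_comm, abs_of_nonneg] <;> unfold left right <;> linarith [C.halfAngle_nonneg i]
  rw [arcDist_eq_abs_sub (h ▸ by linarith [C.halfAngle_le i]), h]

section Edge

variable (e : ι × Bool)

lemma edge_eq_or :
    C.edge e = (C.left e.1, C.right e.1) ∨ C.edge e = (C.right e.1, C.left e.1) := by
  unfold edge
  split_ifs <;> simp

lemma arcDist_edge : arcDist (C.edge e).1 (C.edge e).2 = 2 * C.halfAngle e.1 := by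
  rcases C.edge_eq_or e with h | h <;> rw [h]
  · exact C.arcDist_left_right _
  · exact (arcDist_comm _ _).trans (C.arcDist_left_right _)

lemma chordLen_edge : chordLen (C.edge e).1 (C.edge e).2 = C.length e.1 := by
  rw [chordLen, arcDist_edge, mul_div_cancel_left₀ _ two_ne_zero, length]

lemma arcDist_sub_chordLen_edge :
    arcDist (C.edge e).1 (C.edge e).2 - chordLen (C.edge e).1 (C.edge e).2 = C.saving e.1 := by
  rw [arcDist_edge, chordLen_edge, ← length_add_saving]
  ring

variable {e} in
lemma covers_of_edge {R p q : ℝ}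
    (h : arcDist p (C.edge e).1 + arcDist q (C.edge e).2 < R) : C.Covers e.1 R p q := by
  rcases C.edge_eq_or e with he | he <;> rw [he] at h
  exacts [.inl h, .inr h]

variable {e} in
lemma InInnerUmbra.edge {p : ℝ} (h : C.InInnerUmbra e.1 p) :
    C.saving e.1 / 2 ≤ arcDist p (C.edge e).1 ∧
      arcDist p (C.edge e).1 + arcDist p (C.edge e).2 ≤ 2 * C.halfAngle e.1 := by
  obtain ⟨hl, hr, hsum⟩ := h
  rcases C.edge_eq_or e with he | he <;> rw [he]
  exacts [⟨hl, hsum⟩, ⟨hr, by linarith⟩]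

variable (p q : ℝ) (L : List (ι × Bool))

lemma sum_length_le_walkCost :
    (L.map fun e => C.length e.1).sum ≤ walkCost q p (L.map C.edge) := by
  simpa only [List.map_map, Function.comp_def, chordLen_edge] using
    _root_.sum_chordLen_le_walkCost p q (L.map C.edge)

lemma arcDist_le_walkCost_add_sum_saving :
    arcDist p q ≤ walkCost q p (L.map C.edge) + (L.map fun e => C.saving e.1).sum := by
  simpa only [List.map_map, Function.comp_def, arcDist_sub_chordLen_edge] using
    arcDist_le_walkCost_add_sum p q (L.map C.edge)

end Edge

/-! ## Walks with the fewest chords -/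

/-- A walk of cost less than `D` from `p` to `q` with the fewest chords among all such walks. -/
def IsMinimalWalk (D p q : ℝ) (L : List (ι × Bool)) : Prop :=
  walkCost q p (L.map C.edge) < D ∧
    ∀ L' : List (ι × Bool), walkCost q p (L'.map C.edge) < D → L.length ≤ L'.length

/-- The chords used by a walk. -/
def support [DecidableEq ι] (L : List (ι × Bool)) : Finset ι := (L.map Prod.fst).toFinset

variable {C} {D p q : ℝ} {L : List (ι × Bool)}

lemma DiamLT.exists_isMinimalWalk (hC : C.DiamLT D) (p q : ℝ) : ∃ L, C.IsMinimalWalk D p q L := by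
  obtain ⟨L, hL, hmin⟩ := exists_minimalFor_of_wellFoundedLT
    (fun L : List (ι × Bool) => walkCost q p (L.map C.edge) < D) List.length (hC p q)
  exact ⟨L, hL, fun L' hL' => (le_total _ _).elim id (hmin hL')⟩

namespace IsMinimalWalk

lemma le_walkCost (h : C.IsMinimalWalk D p q L) {L' : List (ι × Bool)}
    (hlt : L'.length < L.length) : D ≤ walkCost q p (L'.map C.edge) :=
  not_lt.1 fun hc => hlt.not_ge (h.2 L' hc)

/- Between two traversals of the same chord nothing needs to be done: in the same direction the
second one can be skipped, in opposite directions both. -/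
lemma nodup (h : C.IsMinimalWalk D p q L) : (L.map Prod.fst).Nodup := by
  rw [List.Nodup, List.pairwise_map, List.pairwise_iff_forall_sublist]
  intro e f hsub hef
  obtain ⟨A, B, rfl, he, hf⟩ := List.cons_sublist_iff.1 hsub
  obtain ⟨A, A', rfl⟩ := List.append_of_mem he
  obtain ⟨B, B', rfl⟩ := List.append_of_mem (List.singleton_sublist.1 hf)
  have hcost := h.1
  have hmid := walkCost_nonneg (C.edge e).2 (C.edge f).1 ((A' ++ B).map C.edge)
  rw [List.append_assoc, List.cons_append, ← List.append_assoc A' B] at hcost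
  simp only [List.map_append, List.map_cons, walkCost_append_cons, chordLen_edge] at hcost hmid
  have hlen := C.length_nonneg e.1
  by_cases hb : e.2 = f.2
  · obtain rfl : e = f := Prod.ext hef hb
    have := h.le_walkCost (L' := A ++ e :: B') (by simp; omega)
    simp only [List.map_append, List.map_cons, walkCost_append_cons, chordLen_edge] at this
    linarith
  · have hback : (C.edge f).2 = (C.edge e).1 := by
      unfold edge
      rw [hef]
      cases he : e.2 <;> cases hf : f.2 <;> simp_all
    have := h.le_walkCost (L' := A ++ B') (by simp; omega)
    have := walkCost_append_le p q (C.edge e).1 (A.map C.edge) (B'.map C.edge)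
    rw [hback] at hcost
    rw [← List.map_append] at this
    linarith [C.length_nonneg f.1]

variable [DecidableEq ι]

lemma sum_support (h : C.IsMinimalWalk D p q L) (g : ι → ℝ) :
    ∑ i ∈ support L, g i = (L.map fun e => g e.1).sum := by
  rw [support, List.sum_toFinset _ h.nodup, List.map_map, Function.comp_def]

lemma sum_length_support_lt (h : C.IsMinimalWalk D p q L) : ∑ i ∈ support L, C.length i < D := by
  rw [h.sum_support]
  exact (C.sum_length_le_walkCost p q L).trans_lt h.1

lemma support_nonempty (h : C.IsMinimalWalk D p q L) (hpq : D ≤ arcDist p q) :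
    (support L).Nonempty := by
  rw [Finset.nonempty_iff_ne_empty]
  intro hL
  obtain rfl : L = [] := by simpa [support] using hL
  exact h.1.not_ge hpq

lemma covers_of_mem_support (h : C.IsMinimalWalk D p q L) {i : ι} (hi : i ∈ support L) :
    C.Covers i (D - C.length i + ∑ j ∈ (support L).erase i, C.saving j) p q := by
  have hsum := Finset.add_sum_erase _ C.saving hi
  have hcost := h.1
  rw [h.sum_support] at hsum
  obtain ⟨e, he, rfl⟩ := List.mem_map.1 (List.mem_toFinset.1 hi)
  obtain ⟨A, B, rfl⟩ := List.append_of_mem he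
  simp only [List.map_append, List.map_cons, List.sum_append, List.sum_cons,
    walkCost_append_cons, chordLen_edge] at hsum hcost
  have hA := C.arcDist_le_walkCost_add_sum_saving p (C.edge e).1 A
  have hB := C.arcDist_le_walkCost_add_sum_saving (C.edge e).2 q B
  rw [arcDist_comm _ q] at hB
  exact C.covers_of_edge (by linarith)

/- A walk from the inner umbra of the shortest chord never gains by traversing that chord: skip
everything up to the end of this traversal. -/
lemma notMem_support (h : C.IsMinimalWalk D p q L) {o : ι} (hp : C.InInnerUmbra o p)
    (ho : ∀ i, C.saving o ≤ C.length i) : o ∉ support L := by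
  intro hmem
  obtain ⟨e, he, rfl⟩ := List.mem_map.1 (List.mem_toFinset.1 hmem)
  obtain ⟨A, B, rfl⟩ := List.append_of_mem he
  obtain ⟨hsrc, hends⟩ := hp.edge
  have hreach : arcDist p (C.edge e).2 ≤
      walkCost (C.edge e).1 p (A.map C.edge) + C.length e.1 := by
    have hsplit := C.length_add_saving e.1
    cases A with
    | nil => simp only [List.map_nil, walkCost]; linarith
    | cons f A =>
      have hfirst : C.length f.1 ≤ ((f :: A).map fun e => C.length e.1).sum :=
        List.single_le_sum (List.forall_mem_map.2 fun e _ => C.length_nonneg e.1) _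
          (List.mem_map_of_mem List.mem_cons_self)
      have hwalk := C.sum_length_le_walkCost p (C.edge e).1 (f :: A)
      linarith [ho f.1, arcDist_nonneg p (C.edge e).1]
  have hcost := h.1
  simp only [List.map_append, List.map_cons, walkCost_append_cons, chordLen_edge] at hcost
  have hshort := h.le_walkCost (L' := B) (by simp; omega)
  linarith [walkCost_le_arcDist_add p q (C.edge e).2 (B.map C.edge)]

lemma exists_arcDist_add_lt_of_support_eq_pair (h : C.IsMinimalWalk D p q L) {i j : ι}
    (hij : i ≠ j) (hL : support L = {i, j}) :
    ∃ x, (x = C.left j ∨ x = C.right j) ∧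
      (arcDist p x + (C.length i + C.length j) < D ∨
        arcDist q x + (C.length i + C.length j) < D) := by
  have hcard : L.length = 2 := by
    rw [← List.length_map (f := Prod.fst), ← List.toFinset_card_of_nodup h.nodup]
    exact (congrArg _ hL).trans (Finset.card_pair hij)
  obtain ⟨e, f, rfl⟩ := List.length_eq_two.1 hcard
  have hsum := (h.sum_support C.length).symm.trans (congrArg (fun s => ∑ i ∈ s, C.length i) hL)
  have hcost := h.1
  have hj : j ∈ support [e, f] := hL ▸ by simp
  simp only [List.map_cons, List.map_nil, List.sum_cons, List.sum_nil, Finset.sum_pair hij,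
    walkCost, chordLen_edge] at hsum hcost
  have hmid := arcDist_nonneg (C.edge e).2 (C.edge f).1
  rcases (by simpa [support] using hj : j = e.1 ∨ j = f.1) with rfl | rfl
  · refine ⟨(C.edge e).1, ?_, .inl ?_⟩
    · rcases C.edge_eq_or e with he | he <;> simp [he]
    · linarith [arcDist_nonneg (C.edge f).2 q]
  · refine ⟨(C.edge f).2, ?_, .inr ?_⟩
    · rcases C.edge_eq_or f with hf | hf <;> simp [hf]
    · rw [arcDist_comm]
      linarith [arcDist_nonneg p (C.edge e).1]

end IsMinimalWalk

end ChordFamily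

/-! ## Covering the circle -/

lemma two_pi_le_sum_of_forall_arcDist_le {ι : Type*} [Fintype ι] {c r : ι → ℝ} (hr : ∀ i, 0 ≤ r i)
    (a : ℝ) (h : ∀ μ ∈ Set.Ico a (a + 2 * π), ∃ i, arcDist μ (c i) ≤ r i / 2) :
    2 * π ≤ ∑ i, r i := by
  have : Fact (0 < 2 * π) := ⟨two_pi_pos⟩
  have hcover : (Set.univ : Set (AddCircle (2 * π))) ⊆
      ⋃ i, Metric.closedBall (c i : AddCircle (2 * π)) (r i / 2) := by
    rw [← AddCircle.coe_image_Ico_eq (2 * π) a]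
    rintro _ ⟨μ, hμ, rfl⟩
    obtain ⟨i, hi⟩ := h μ hμ
    exact Set.mem_iUnion.2 ⟨i, by rwa [Metric.mem_closedBall, ← arcDist_eq_dist]⟩
  have hvol := (measure_mono (μ := volume) hcover).trans (measure_iUnion_fintype_le _ _)
  have hball (i : ι) : volume (Metric.closedBall (c i : AddCircle (2 * π)) (r i / 2)) ≤
      ENNReal.ofReal (r i) := by
    rw [AddCircle.volume_closedBall, mul_div_cancel₀ _ two_ne_zero]
    exact ENNReal.ofReal_le_ofReal (min_le_right _ _)
  rw [AddCircle.measure_univ] at hvol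
  have hsum := hvol.trans (Finset.sum_le_sum fun i _ => hball i)
  rwa [← ENNReal.ofReal_sum_of_nonneg fun i _ => hr i,
    ENNReal.ofReal_le_ofReal_iff (Finset.sum_nonneg fun i _ => hr i)] at hsum

/- Two points at distance `2 * ℓ` whose distances to the ends of an arc of length `2 * t` sum up to
less than `R`: this confines their midpoint, and the two lengths differ by less than `R`. -/
lemma arcDist_lt_and_abs_sub_lt {m c ℓ t R : ℝ}
    (h : arcDist (m - ℓ) (c - t) + arcDist (m + ℓ) (c + t) < R) (hR : |2 * (ℓ - t)| ≤ 2 * π - R) :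
    arcDist m c < R / 2 ∧ |2 * (ℓ - t)| < R := by
  obtain ⟨j, hj⟩ := exists_int_arcDist_eq (m - ℓ) (c - t)
  obtain ⟨k, hk⟩ := exists_int_arcDist_eq (m + ℓ) (c + t)
  rw [hj, hk, show m - ℓ - (c - t) + 2 * π * j = (m - c + 2 * π * j) - (ℓ - t) by ring,
    show m + ℓ - (c + t) + 2 * π * k = (m - c + 2 * π * k) + (ℓ - t) by ring] at h
  generalize ℓ - t = g at *
  have hdiff : |2 * g + 2 * π * (k - j)| < R := by
    refine lt_of_le_of_lt ?_ h
    rw [show 2 * g + 2 * π * (k - j) = (m - c + 2 * π * k + g) - (m - c + 2 * π * j - g) by ring,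
      add_comm |_|]
    exact abs_sub _ _
  obtain rfl : k = j := by
    by_contra hne
    have hone : (1 : ℝ) ≤ |(k : ℝ) - j| := mod_cast Int.one_le_abs (sub_ne_zero.2 hne)
    have hfar := abs_sub (2 * g + 2 * π * (k - j)) (2 * g)
    rw [add_sub_cancel_left, abs_mul, abs_of_pos two_pi_pos] at hfar
    nlinarith [pi_pos]
  rw [sub_self, mul_zero, add_zero] at hdiff
  refine ⟨(arcDist_le_abs_add m c k).trans_lt ?_, hdiff⟩
  have hmid := abs_add_le (m - c + 2 * π * k - g) (m - c + 2 * π * k + g)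
  rw [sub_add_add_cancel, ← two_mul, abs_mul, abs_two] at hmid
  linarith

lemma arcDist_sub_half_add_half {μ d : ℝ} (h₀ : 0 ≤ d) (h₁ : d ≤ π) :
    arcDist (μ - d / 2) (μ + d / 2) = d := by
  have h : |μ - d / 2 - (μ + d / 2)| = d := by
    rw [abs_sub_comm, abs_of_nonneg] <;> linarith
  rw [arcDist_eq_abs_sub (h.trans_le h₁), h]

namespace ChordFamily

variable {ι : Type*} {C : ChordFamily ι} {D d : ℝ}

lemma Covers.arcDist_mid_lt {i : ι} {R μ : ℝ} (hR : R ≤ d) (hd : d ≤ π)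
    (hc : C.Covers i R (μ - d / 2) (μ + d / 2)) :
    (arcDist μ (C.mid i) < R / 2 ∧ d - 2 * C.halfAngle i < R) ∨
      (arcDist μ (C.mid i + π) < R / 2 ∧ 2 * π - d - 2 * C.halfAngle i < R) := by
  have hθ₀ := C.halfAngle_nonneg i
  have hθ₁ := C.halfAngle_le i
  rcases hc with hc | hc
  · obtain ⟨hmid, hlt⟩ := arcDist_lt_and_abs_sub_lt hc (abs_le.2 ⟨by linarith, by linarith⟩)
    exact .inl ⟨hmid, by linarith [le_abs_self (2 * (d / 2 - C.halfAngle i))]⟩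
  · have hleft : SamePoint (C.left i) (C.mid i + π + (π - C.halfAngle i)) :=
      samePoint_of_eq_add (-1) (by unfold left; push_cast; ring)
    rw [hleft.arcDist_right,
      show C.right i = C.mid i + π - (π - C.halfAngle i) by unfold right; ring] at hc
    obtain ⟨hmid, hlt⟩ := arcDist_lt_and_abs_sub_lt hc (abs_le.2 ⟨by linarith, by linarith⟩)
    exact .inr ⟨hmid, by linarith [neg_le_abs (2 * (d / 2 - (π - C.halfAngle i)))]⟩

/-! ## Charging -/

/-- Every set of chords that fits into a walk of length less than `D` has a member `i`, the one to
be charged, such that the other members save at most `ρ i`. -/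
def IsCharging [DecidableEq ι] (C : ChordFamily ι) (D : ℝ) (ρ : ι → ℝ) : Prop :=
  ∀ U : Finset ι, U.Nonempty → ∑ i ∈ U, C.length i < D →
    ∃ i ∈ U, ∑ j ∈ U.erase i, C.saving j ≤ ρ i

/-- A bound for the measure of the set of pairs of points at distance `d` for which the `i`-th
chord can be charged when the other chords save at most `ρ`. Such pairs, given by their
midpoints, lie near the middle of the chord or near the antipode of the middle. -/
noncomputable def coverage (C : ChordFamily ι) (D d ρ : ℝ) (i : ι) : ℝ :=
  (if d < D + C.saving i + ρ then D - C.length i + ρ else 0) +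
    if 2 * π - d < D + C.saving i + ρ then D - C.length i + ρ else 0

theorem DiamLT.two_pi_le_sum_coverage [Fintype ι] [DecidableEq ι] {ρ : ι → ℝ} (hC : C.DiamLT D)
    (hρ : C.IsCharging D ρ) (hD : 2 ≤ D) (hDd : D ≤ d) (hd : d ≤ π) (hρ₀ : ∀ i, 0 ≤ ρ i)
    (hρ₁ : ∀ i, ρ i ≤ C.length i ∨ D + C.saving i + ρ i ≤ d) :
    2 * π ≤ ∑ i, C.coverage D d (ρ i) i := by
  have hnonneg (i : ι) : 0 ≤ D - C.length i + ρ i := by linarith [C.length_le_two i, hρ₀ i]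
  have hcover := two_pi_le_sum_of_forall_arcDist_le (ι := ι ⊕ ι)
    (c := Sum.elim C.mid fun i => C.mid i + π)
    (r := Sum.elim (fun i => if d < D + C.saving i + ρ i then D - C.length i + ρ i else 0)
      fun i => if 2 * π - d < D + C.saving i + ρ i then D - C.length i + ρ i else 0)
    (by rintro (i | i) <;> simp only [Sum.elim_inl, Sum.elim_inr] <;> split_ifs <;> simp [hnonneg])
    0 fun μ _ => ?_
  · simpa only [coverage, Fintype.sum_sum_type, Sum.elim_inl, Sum.elim_inr,
      Finset.sum_add_distrib] using hcover
  obtain ⟨L, hL⟩ := hC.exists_isMinimalWalk (μ - d / 2) (μ + d / 2)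
  have hdist := arcDist_sub_half_add_half (μ := μ) (d := d) (by linarith) hd
  obtain ⟨i, hi, hle⟩ :=
    hρ _ (hL.support_nonempty (hDd.trans_eq hdist.symm)) hL.sum_length_support_lt
  have hcov := hL.covers_of_mem_support hi
  have hsplit := C.length_add_saving i
  have hR : D - C.length i + ∑ j ∈ (support L).erase i, C.saving j ≤ d := by
    rcases hρ₁ i with hi | hi <;> linarith [C.length_nonneg i, C.saving_nonneg i]
  rcases hcov.arcDist_mid_lt hR hd with ⟨hmid, hlt⟩ | ⟨hmid, hlt⟩
  · exact ⟨.inl i, by rw [Sum.elim_inl, Sum.elim_inl, if_pos] <;> linarith⟩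
  · exact ⟨.inr i, by rw [Sum.elim_inr, Sum.elim_inr, if_pos] <;> linarith⟩

variable {ρ : ℝ} {i : ι}

lemma coverage_le_two_mul (hρ : 0 ≤ D - C.length i + ρ) :
    C.coverage D d ρ i ≤ 2 * (D - C.length i + ρ) := by
  unfold coverage
  split_ifs <;> linarith

lemma coverage_le_of_saving_add_le (hρ : 0 ≤ D - C.length i + ρ)
    (hs : D + C.saving i + ρ ≤ 2 * π - d) : C.coverage D d ρ i ≤ D - C.length i + ρ := by
  unfold coverage
  rw [if_neg hs.not_gt, add_zero]
  split_ifs <;> linarith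

lemma coverage_eq_zero (hd : d ≤ π) (hs : D + C.saving i + ρ ≤ d) : C.coverage D d ρ i = 0 := by
  unfold coverage
  rw [if_neg hs.not_gt, if_neg (by linarith), add_zero]

/-! ## Estimates for the saving of a chord -/

/- A chord of length `2 - r ^ 2` spans an angle of about `π - 2 * r`. -/
lemma saving_le_of_length_le {r : ℝ} (hi : C.length i ≤ 2 - r ^ 2) :
    C.saving i ≤ π - 2 - 2 * r + r ^ 2 := by
  have hθ := C.halfAngle_le i
  rw [length, ← cos_pi_div_two_sub] at hi
  rw [saving, ← cos_pi_div_two_sub]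
  set y := π / 2 - C.halfAngle i with hy
  have hry : r ≤ y := by
    refine le_of_sq_le_sq ?_ (by linarith)
    linarith [one_sub_sq_div_two_le_cos (x := y)]
  have hlip := (le_abs_self _).trans (abs_cos_sub_cos_le r y)
  rw [abs_sub_comm, abs_of_nonneg (sub_nonneg.2 hry)] at hlip
  linarith [one_sub_sq_div_two_le_cos (x := r)]

lemma saving_le_pi_sub_two (C : ChordFamily ι) (i : ι) : C.saving i ≤ π - 2 := by
  simpa using C.saving_le_of_length_le (r := 0) (by simpa using C.length_le_two i)

lemma saving_le_mul_length {Θ k : ℝ} (hΘ₀ : 0 ≤ Θ) (hΘ₁ : Θ ≤ 1)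
    (hi : C.length i ≤ 2 * (Θ - Θ ^ 3 / 6)) (hk : 1 ≤ (1 + k) * (1 - Θ ^ 2 / 6)) :
    C.saving i ≤ k * C.length i := by
  have hθ₀ := C.halfAngle_nonneg i
  have hθ₁ := C.halfAngle_le i
  unfold saving length at *
  set θ := C.halfAngle i
  have hle : θ ≤ Θ := by
    by_contra! hlt
    have := sin_lt_sin_of_lt_of_le_pi_div_two (by linarith [pi_pos]) hθ₁ hlt
    linarith [sin_ge_sub_cube hΘ₀]
  have hfactor : 0 < 1 - Θ ^ 2 / 6 := by nlinarith
  have hk₀ : 0 < 1 + k := pos_of_mul_pos_left (one_pos.trans_le hk) hfactor.le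
  have hsin : θ * (1 - Θ ^ 2 / 6) ≤ sin θ :=
    calc θ * (1 - Θ ^ 2 / 6) ≤ θ * (1 - θ ^ 2 / 6) := by gcongr
      _ = θ - θ ^ 3 / 6 := by ring
      _ ≤ sin θ := sin_ge_sub_cube hθ₀
  have : θ ≤ (1 + k) * sin θ :=
    calc θ ≤ θ * ((1 + k) * (1 - Θ ^ 2 / 6)) := le_mul_of_one_le_right hθ₀ hk
      _ = (1 + k) * (θ * (1 - Θ ^ 2 / 6)) := by ring
      _ ≤ (1 + k) * sin θ := by gcongr
  linarith

variable {U : Finset ι}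

lemma sum_saving_le_mul_sum_length {Θ k : ℝ} (hΘ₀ : 0 ≤ Θ) (hΘ₁ : Θ ≤ 1)
    (hU : ∑ i ∈ U, C.length i ≤ 2 * (Θ - Θ ^ 3 / 6)) (hk : 1 ≤ (1 + k) * (1 - Θ ^ 2 / 6)) :
    ∑ i ∈ U, C.saving i ≤ k * ∑ i ∈ U, C.length i := by
  rw [Finset.mul_sum]
  exact Finset.sum_le_sum fun i hi => C.saving_le_mul_length hΘ₀ hΘ₁
    ((Finset.single_le_sum (fun j _ => C.length_nonneg j) hi).trans hU) hk

lemma sum_saving_le_pi_div_two_sub_one (hlen : ∀ i ∈ U, C.length i ≤ 1.86)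
    (hU : ∑ i ∈ U, C.length i < π / 2 + 1) : ∑ i ∈ U, C.saving i ≤ π / 2 - 1 := by
  classical
  have hπ₁ := pi_gt_d6
  have hπ₂ := pi_lt_d6
  by_cases hlong : ∃ i ∈ U, 1.5 < C.length i
  · obtain ⟨i, hi, hi₁⟩ := hlong
    rw [← Finset.add_sum_erase U _ hi] at hU ⊢
    by_cases hi₂ : C.length i ≤ 1.75
    · have hs := C.saving_le_of_length_le (i := i) (r := 0.5) (by linarith)
      have hrest := sum_saving_le_mul_sum_length (C := C) (U := U.erase i) (Θ := 0.5656)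
        (k := 0.0564) (by norm_num) (by norm_num) (by linarith) (by norm_num)
      linarith
    · have hs := C.saving_le_of_length_le (r := 0.374)
        ((hlen i hi).trans (by norm_num))
      have hrest := sum_saving_le_mul_sum_length (C := C) (U := U.erase i) (Θ := 0.4235)
        (k := 0.031) (by norm_num) (by norm_num) (by linarith) (by norm_num)
      linarith
  · push Not at hlong
    have hrest : ∑ i ∈ U, C.saving i ≤ ∑ i ∈ U, 0.1384 * C.length i :=
      Finset.sum_le_sum fun i hi => C.saving_le_mul_length (Θ := 0.854) (by norm_num)
        (by norm_num) ((hlong i hi).trans (by norm_num)) (by norm_num)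
    rw [← Finset.mul_sum] at hrest
    linarith

lemma sum_erase_saving_le [DecidableEq ι] (hi : i ∈ U) (hlen : 1.86 < C.length i)
    (hU : ∑ i ∈ U, C.length i < π / 2 + 1) : ∑ j ∈ U.erase i, C.saving j ≤ 0.0161 := by
  rw [← Finset.add_sum_erase U _ hi] at hU
  have hrest := sum_saving_le_mul_sum_length (C := C) (U := U.erase i) (Θ := 0.3638) (k := 0.0226)
    (by norm_num) (by norm_num) (by linarith [pi_lt_d6]) (by norm_num)
  linarith [pi_lt_d6]

lemma coverage_le_of_threshold (r : ℝ) {M : ℝ} (hρ : 0 ≤ D - C.length i + ρ)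
    (hr : D + (π - 2 - 2 * r + r ^ 2) + ρ ≤ 2 * π - d)
    (hlong : 2 - r ^ 2 < C.length i → 2 * (D - C.length i + ρ) ≤ M)
    (hM : D - C.length i + ρ ≤ M) : C.coverage D d ρ i ≤ M := by
  rcases lt_or_ge (2 - r ^ 2) (C.length i) with hi | hi
  · exact (coverage_le_two_mul hρ).trans (hlong hi)
  · have := saving_le_of_length_le hi
    exact (coverage_le_of_saving_add_le hρ (by linarith)).trans hM

end ChordFamily

/-! ## One short chord -/

lemma arcDist_add_right (x y t : ℝ) : arcDist (x + t) (y + t) = arcDist x y := by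
  simp only [arcDist, add_sub_add_right_eq_sub]

lemma sub_lt_of_arcDist_lt {x y R : ℝ} (h : arcDist x y < R) (hxy : x - y ≤ 2 * π - R) :
    x - y < R :=
  not_le.1 fun hle => h.not_ge (le_arcDist hle hxy)

/- The balls around `c i₀` and `c i₁` reach into the one around `c o` and may be shifted away from
it, to where they cover the points close to `c o + t` and `c o - t`. -/
lemma two_pi_le_sum_of_shift {ι : Type*} [Fintype ι] {c R : ι → ℝ} {o i₀ i₁ : ι} {t : ℝ}
    (hR : ∀ i, 0 ≤ R i) (hi₀ : i₀ ≠ o) (hi₁ : i₁ ≠ o) (hne : i₁ ≠ i₀) (ho : 2 * t ≤ R o)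
    (hR₀ : R i₀ ≤ 2 * t) (hR₁ : R i₁ ≤ 2 * t) (h₀ : arcDist (c o + t) (c i₀) < R i₀ / 2)
    (h₁ : arcDist (c o - t) (c i₁) < R i₁ / 2)
    (h : ∀ μ, (∃ i, arcDist μ (c i) < R i / 2) ∨
      arcDist μ (c o + t) < R i₀ ∨ arcDist μ (c o - t) < R i₁) : 2 * π ≤ ∑ i, R i := by
  classical
  refine two_pi_le_sum_of_forall_arcDist_le hR (c o - t) (c := Function.update
    (Function.update c i₁ (c o - t - R i₁ / 2)) i₀ (c o + t + R i₀ / 2)) fun μ ⟨hμ₁, hμ₂⟩ => ?_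
  rcases le_or_gt μ (c o + t) with hμ | hμ
  · refine ⟨o, ?_⟩
    rw [Function.update_of_ne hi₀.symm, Function.update_of_ne hi₁.symm]
    exact (arcDist_le_abs_sub _ _).trans (abs_le.2 ⟨by linarith, by linarith⟩)
  have hshift₀ (hnear : arcDist μ (c o + t) < R i₀) :
      arcDist μ (c o + t + R i₀ / 2) ≤ R i₀ / 2 := by
    have := sub_lt_of_arcDist_lt hnear (by linarith)
    exact (arcDist_le_abs_sub _ _).trans (abs_le.2 ⟨by linarith, by linarith⟩)
  have hshift₁ (hnear : arcDist μ (c o - t) < R i₁) :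
      arcDist μ (c o - t - R i₁ / 2) ≤ R i₁ / 2 := by
    have hturn : SamePoint (c o - t) (c o - t + 2 * π) :=
      samePoint_of_eq_add (-1) (by push_cast; ring)
    rw [arcDist_comm, hturn.arcDist_left] at hnear
    have := sub_lt_of_arcDist_lt hnear (by linarith)
    refine (arcDist_le_abs_add _ _ (-1)).trans (abs_le.2 ⟨?_, ?_⟩) <;> push_cast <;> linarith
  rcases h μ with ⟨i, hi⟩ | hnear | hnear
  · obtain rfl | hi₀' := eq_or_ne i i₀
    · rw [arcDist_comm] at h₀
      exact ⟨i, by simpa using hshift₀ (by linarith [arcDist_triangle μ (c i) (c o + t)])⟩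
    obtain rfl | hi₁' := eq_or_ne i i₁
    · rw [arcDist_comm] at h₁
      exact ⟨i, by simpa [hne] using hshift₁ (by linarith [arcDist_triangle μ (c i) (c o - t)])⟩
    · exact ⟨i, by simpa [hi₀', hi₁'] using hi.le⟩
  · exact ⟨i₀, by simpa using hshift₀ hnear⟩
  · exact ⟨i₁, by simpa [hne] using hshift₁ hnear⟩

namespace ChordFamily

variable {ι : Type*} {C : ChordFamily ι} {D : ℝ} {o i : ι}

lemma inInnerUmbra_mid_add {t : ℝ} (ht : |t| ≤ C.length i / 2) :
    C.InInnerUmbra i (C.mid i + t) := by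
  obtain ⟨hlo, hhi⟩ := abs_le.1 ht
  have hsplit := C.length_add_saving i
  have hs := C.saving_nonneg i
  have hθ := C.halfAngle_le i
  have hleft : arcDist (C.mid i + t) (C.left i) = C.halfAngle i + t := by
    have h : |C.mid i + t - C.left i| = C.halfAngle i + t := by
      rw [abs_of_nonneg] <;> unfold left <;> linarith
    rw [arcDist_eq_abs_sub (h ▸ by linarith), h]
  have hright : arcDist (C.mid i + t) (C.right i) = C.halfAngle i - t := by
    have h : |C.mid i + t - C.right i| = C.halfAngle i - t := by
      rw [abs_sub_comm, abs_of_nonneg] <;> unfold right <;> linarith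
    rw [arcDist_eq_abs_sub (h ▸ by linarith), h]
  refine ⟨?_, ?_, ?_⟩ <;> linarith

lemma arcDist_mid_add_le {t x : ℝ} (ht : |t| ≤ C.length i / 2)
    (hx : x = C.left i ∨ x = C.right i) :
    arcDist x (C.mid i + t) ≤ C.length i + C.saving i / 2 := by
  obtain ⟨hl, hr, hsum⟩ := inInnerUmbra_mid_add ht
  have hsplit := C.length_add_saving i
  rw [arcDist_comm]
  rcases hx with rfl | rfl <;> linarith

lemma Covers.symm {R p q : ℝ} (h : C.Covers i R p q) : C.Covers i R q p := by
  unfold Covers at *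
  rwa [or_comm, add_comm, add_comm (arcDist q _)]

/- Near the antipode of its middle, a chord is too short to help alone. -/
lemma Covers.arcDist_mid_lt_of_length {μ : ℝ} (hD : D ≤ π / 2 + 1)
    (h : C.Covers i (D - C.length i) (μ - D / 2) (μ + D / 2)) :
    arcDist μ (C.mid i) < (D - C.length i) / 2 := by
  have ha := C.length_nonneg i
  rcases h.arcDist_mid_lt (by linarith) (by linarith [pi_gt_three]) with h | h
  · exact h.1
  · linarith [C.length_add_saving i, C.saving_le_pi_sub_two i]

variable [DecidableEq ι]

/-- The amount that the chord `o` can save in a walk of length less than `D` through another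
chord `i`. -/
noncomputable def pairSaving (C : ChordFamily ι) (D : ℝ) (o i : ι) : ℝ :=
  if i ≠ o ∧ C.length i + C.length o < D then C.saving o else 0

lemma pairSaving_nonneg (C : ChordFamily ι) (D : ℝ) (o i : ι) : 0 ≤ C.pairSaving D o i := by
  unfold pairSaving
  split_ifs
  exacts [C.saving_nonneg o, le_rfl]

lemma pairSaving_le_saving (C : ChordFamily ι) (D : ℝ) (o i : ι) :
    C.pairSaving D o i ≤ C.saving o := by
  unfold pairSaving
  split_ifs
  exacts [le_rfl, C.saving_nonneg o]

lemma pairSaving_self (C : ChordFamily ι) (D : ℝ) (o : ι) : C.pairSaving D o o = 0 :=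
  if_neg fun h => h.1 rfl

lemma pairSaving_of_le (h : D ≤ C.length i + C.length o) : C.pairSaving D o i = 0 :=
  if_neg fun h' => h'.2.not_ge h

section Pairwise

variable (hpair : Set.Pairwise {o}ᶜ fun i j => D ≤ C.length i + C.length j) {U : Finset ι}
include hpair

lemma erase_subset_singleton (hU : ∑ j ∈ U, C.length j < D) (hi : i ∈ U) (hio : i ≠ o) :
    U.erase i ⊆ {o} := by
  intro j hj
  rw [Finset.mem_singleton]
  by_contra hjo
  have := Finset.single_le_sum (fun k _ => C.length_nonneg k) hj
  linarith [hpair hio hjo (Finset.ne_of_mem_erase hj).symm, Finset.add_sum_erase U C.length hi]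

lemma sum_erase_saving_le_pairSaving (hU : ∑ j ∈ U, C.length j < D) (hi : i ∈ U) (hio : i ≠ o) :
    ∑ j ∈ U.erase i, C.saving j ≤ C.pairSaving D o i := by
  rcases Finset.subset_singleton_iff.1 (erase_subset_singleton hpair hU hi hio) with h | h
  · rw [h, Finset.sum_empty]
    exact C.pairSaving_nonneg D o i
  · rw [← Finset.add_sum_erase U _ hi, h, Finset.sum_singleton] at hU
    rw [h, Finset.sum_singleton, pairSaving, if_pos ⟨hio, hU⟩]

lemma isCharging_pairSaving : C.IsCharging D (C.pairSaving D o) := by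
  intro U hne hU
  by_cases hUo : ∃ i ∈ U, i ≠ o
  · obtain ⟨i, hi, hio⟩ := hUo
    exact ⟨i, hi, sum_erase_saving_le_pairSaving hpair hU hi hio⟩
  · push Not at hUo
    obtain rfl := Finset.eq_singleton_iff_nonempty_unique_mem.2 ⟨hne, hUo⟩
    exact ⟨o, by simp [C.pairSaving_nonneg]⟩

end Pairwise

omit [DecidableEq ι] in
lemma DiamLT.exists_covers_of_inInnerUmbra (hC : C.DiamLT D)
    (hpair : Set.Pairwise {o}ᶜ fun i j => D ≤ C.length i + C.length j)
    (ho : ∀ i, C.saving o ≤ C.length i) {p q : ℝ} (hp : C.InInnerUmbra o p)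
    (hpq : D ≤ arcDist p q) : ∃ i ≠ o, C.Covers i (D - C.length i) p q := by
  classical
  obtain ⟨L, hL⟩ := hC.exists_isMinimalWalk p q
  have hoL := hL.notMem_support hp ho
  obtain ⟨i, hi⟩ := hL.support_nonempty hpq
  have hio := ne_of_mem_of_not_mem hi hoL
  have hsub := erase_subset_singleton hpair hL.sum_length_support_lt hi hio
  have hempty : (support L).erase i = ∅ :=
    (Finset.subset_singleton_iff.1 hsub).resolve_right fun h =>
      hoL (Finset.mem_of_mem_erase (h ▸ Finset.mem_singleton_self o))
  exact ⟨i, hio, by simpa [hempty] using hL.covers_of_mem_support hi⟩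

/- A pair at distance `D` that is served only near the antipode of the middle of a chord `i` needs
`o` as well, so one of its two points is close to an endpoint of `o`. -/
lemma DiamLT.arcDist_mid_lt_or (hC : C.DiamLT D) (hD₀ : 0 ≤ D) (hD₁ : D ≤ π / 2 + 1)
    (hpair : Set.Pairwise {o}ᶜ fun i j => D ≤ C.length i + C.length j)
    (ho : ∀ i, C.saving o ≤ C.length i) (μ : ℝ) :
    (∃ i, arcDist μ (C.mid i) < (D - C.length i + C.pairSaving D o i) / 2) ∨
      ∃ i ≠ o, C.length i + C.length o < D ∧ 2 * π - 2 * D < C.saving i + C.saving o ∧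
        ∃ x, (x = C.left o ∨ x = C.right o) ∧
          (arcDist (μ - D / 2) x + (C.length i + C.length o) < D ∨
            arcDist (μ + D / 2) x + (C.length i + C.length o) < D) := by
  obtain ⟨L, hL⟩ := hC.exists_isMinimalWalk (μ - D / 2) (μ + D / 2)
  have hπ := pi_gt_three
  have hdist := arcDist_sub_half_add_half (μ := μ) hD₀ (by linarith)
  obtain ⟨i, hi, hle⟩ := isCharging_pairSaving hpair _ (hL.support_nonempty hdist.ge)
    hL.sum_length_support_lt
  have hcov := hL.covers_of_mem_support hi
  have hsaving := C.pairSaving_le_saving D o i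
  have hsplit := C.length_add_saving i
  rcases hcov.arcDist_mid_lt (by linarith [ho i]) (by linarith) with ⟨hmid, -⟩ | ⟨-, hlt⟩
  · exact .inl ⟨i, by linarith⟩
  have hused : ¬ C.pairSaving D o i = 0 := by
    intro h
    linarith [C.saving_le_pi_sub_two i]
  obtain ⟨⟨hio, hlen⟩, -⟩ := ite_ne_right_iff.1 hused
  have hsub := erase_subset_singleton hpair hL.sum_length_support_lt hi hio
  rcases Finset.subset_singleton_iff.1 hsub with hU | hU
  · rw [hU, Finset.sum_empty] at hlt
    linarith [C.saving_le_pi_sub_two i]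
  · have hpairU : support L = {i, o} := by rw [← Finset.insert_erase hi, hU]
    exact .inr ⟨i, hio, hlen, by linarith,
      hL.exists_arcDist_add_lt_of_support_eq_pair hio hpairU⟩

omit [DecidableEq ι] in
lemma arcDist_mid_add_lt {x μ r t : ℝ} (ht : |t| ≤ C.length o / 2)
    (hx : x = C.left o ∨ x = C.right o)
    (h : arcDist (μ + t - r) x + (C.length i + C.length o) < D) :
    arcDist μ (C.mid o + r) < D - C.length i + C.saving o / 2 := by
  rw [← arcDist_add_right _ _ (t - r), add_assoc, add_sub_cancel, ← add_sub_assoc]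
  linarith [arcDist_triangle (μ + t - r) x (C.mid o + t), arcDist_mid_add_le ht hx]

lemma DiamLT.arcDist_lt_or (hC : C.DiamLT D) (hD₀ : 0 ≤ D) (hD₁ : D ≤ π / 2 + 1)
    (hpair : Set.Pairwise {o}ᶜ fun i j => D ≤ C.length i + C.length j)
    (ho : ∀ i, C.saving o ≤ C.length i) {g : ℝ}
    (hg : ∀ i ≠ o, C.length i + C.length o < D → 2 * π - 2 * D < C.saving i + C.saving o →
      D - C.length i + C.saving o / 2 ≤ g) (μ : ℝ) :
    (∃ i, arcDist μ (C.mid i) < (D - C.length i + C.pairSaving D o i) / 2) ∨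
      arcDist μ (C.mid o + (D - C.length o) / 2) < g ∨
        arcDist μ (C.mid o - (D - C.length o) / 2) < g := by
  have hhalf : |C.length o / 2| ≤ C.length o / 2 :=
    (abs_of_nonneg (by linarith [C.length_nonneg o])).le
  refine (hC.arcDist_mid_lt_or hD₀ hD₁ hpair ho μ).imp_right ?_
  rintro ⟨i, hio, hlen, hsaving, x, hx, h | h⟩
  · refine .inl (lt_of_lt_of_le ?_ (hg i hio hlen hsaving))
    refine arcDist_mid_add_lt (t := -(C.length o / 2)) ((abs_neg _).trans_le hhalf) hx ?_
    convert h using 3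
    ring
  · refine .inr (lt_of_lt_of_le ?_ (hg i hio hlen hsaving))
    rw [sub_eq_add_neg]
    refine arcDist_mid_add_lt hhalf hx ?_
    convert h using 3
    ring

omit [DecidableEq ι] in
lemma DiamLT.exists_ne_arcDist_lt (hC : C.DiamLT D) (hD₀ : 0 ≤ D) (hD₁ : D ≤ π / 2 + 1)
    (hpair : Set.Pairwise {o}ᶜ fun i j => D ≤ C.length i + C.length j)
    (ho : ∀ i, C.saving o ≤ C.length i) :
    (∃ i ≠ o, arcDist (C.mid o + (D - C.length o) / 2) (C.mid i) < (D - C.length i) / 2) ∧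
      ∃ i ≠ o, arcDist (C.mid o - (D - C.length o) / 2) (C.mid i) < (D - C.length i) / 2 := by
  have hπ := pi_gt_three
  have hhalf : |C.length o / 2| ≤ C.length o / 2 :=
    (abs_of_nonneg (by linarith [C.length_nonneg o])).le
  constructor
  · set w := C.mid o + (D - C.length o) / 2 with hw
    have hdist := arcDist_sub_half_add_half (μ := w) hD₀ (by linarith)
    have humbra : C.InInnerUmbra o (w - D / 2) := by
      convert inInnerUmbra_mid_add (C := C) ((abs_neg _).trans_le hhalf) using 1
      rw [hw]
      ring
    obtain ⟨i, hio, hi⟩ := hC.exists_covers_of_inInnerUmbra hpair ho humbra hdist.ge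
    exact ⟨i, hio, hi.arcDist_mid_lt_of_length hD₁⟩
  · set w := C.mid o - (D - C.length o) / 2 with hw
    have hdist := arcDist_sub_half_add_half (μ := w) hD₀ (by linarith)
    rw [arcDist_comm] at hdist
    have humbra : C.InInnerUmbra o (w + D / 2) := by
      convert inInnerUmbra_mid_add (C := C) hhalf using 1
      rw [hw]
      ring
    obtain ⟨i, hio, hi⟩ := hC.exists_covers_of_inInnerUmbra hpair ho humbra hdist.ge
    exact ⟨i, hio, hi.symm.arcDist_mid_lt_of_length hD₁⟩

/- The two pairs at distance `D` with one point in the inner umbra of `o`, at the border of the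
range that `o` serves, are served by two other chords, whose ranges thus overlap that of `o`. -/
theorem DiamLT.two_pi_le_sum_of_saving_le_length [Fintype ι] (hC : C.DiamLT D) (hD₀ : 2 ≤ D)
    (hD₁ : D ≤ π / 2 + 1) (hpair : Set.Pairwise {o}ᶜ fun i j => D ≤ C.length i + C.length j)
    (ho : ∀ i, C.saving o ≤ C.length i) {g : ℝ}
    (hg : ∀ i ≠ o, C.length i + C.length o < D → 2 * π - 2 * D < C.saving i + C.saving o →
      D - C.length i + C.saving o / 2 ≤ g)
    {R : ι → ℝ} (hR : ∀ i, D - C.length i + C.pairSaving D o i ≤ R i)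
    (hgR : ∀ i ≠ o, g ≤ R i) (hRo : ∀ i ≠ o, R i ≤ D - C.length o) : 2 * π ≤ ∑ i, R i := by
  have hD : 0 ≤ D := by linarith
  have hle (i : ι) : D - C.length i ≤ R i := by linarith [hR i, C.pairSaving_nonneg D o i]
  obtain ⟨⟨i₀, hi₀, h₀⟩, i₁, hi₁, h₁⟩ := hC.exists_ne_arcDist_lt hD hD₁ hpair ho
  have hne : i₁ ≠ i₀ := by
    rintro rfl
    have hdist := arcDist_sub_half_add_half (μ := C.mid o) (d := D - C.length o)
      (by linarith [C.length_le_two o]) (by linarith [C.length_nonneg o, pi_gt_three])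
    rw [arcDist_comm] at h₀
    refine absurd (hdist.symm.trans_le (arcDist_triangle _ (C.mid i₁) _)) (not_le.2 ?_)
    exact (add_lt_add h₁ h₀).trans_le (by linarith [hle i₁, hRo i₁ hi₁])
  refine two_pi_le_sum_of_shift (c := C.mid) (t := (D - C.length o) / 2)
    (fun i => by linarith [hle i, C.length_le_two i]) hi₀ hi₁ hne
    (by linarith [hle o]) (by linarith [hRo i₀ hi₀]) (by linarith [hRo i₁ hi₁])
    (by linarith [hle i₀]) (by linarith [hle i₁]) fun μ => ?_
  refine (hC.arcDist_lt_or hD hD₁ hpair ho hg μ).imp ?_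
    (Or.imp (fun h => h.trans_le (hgR i₀ hi₀)) fun h => h.trans_le (hgR i₁ hi₁))
  rintro ⟨i, hi⟩
  exact ⟨i, by linarith [hR i]⟩

end ChordFamily

/-! ## Seven chords -/

namespace ChordFamily

section General

variable {ι : Type*} {C : ChordFamily ι} {D : ℝ}

lemma saving_le_length (C : ChordFamily ι) (i : ι) : C.saving i ≤ C.length i := by
  have hsin := mul_le_sin (C.halfAngle_nonneg i) (C.halfAngle_le i)
  have hπ : (1 : ℝ) / 2 ≤ 2 / π := by
    rw [div_le_div_iff₀ two_pos pi_pos]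
    linarith [pi_le_four]
  have := mul_le_mul_of_nonneg_right hπ (C.halfAngle_nonneg i)
  unfold saving length
  linarith

lemma saving_le_pi_div_two_sub_one {i : ι} (hi : C.length i ≤ 1.86) :
    C.saving i ≤ π / 2 - 1 := by
  simpa using sum_saving_le_pi_div_two_sub_one (C := C) (U := {i}) (by simpa using hi)
    (by rw [Finset.sum_singleton]; linarith [pi_gt_d6])

variable [DecidableEq ι]

lemma saving_add_pairSaving_le {i o : ι} (hi : C.length i ≤ 1.86) (ho : C.length o ≤ 1.86) :
    C.saving i + C.pairSaving (π / 2 + 1) o i ≤ π / 2 - 1 := by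
  unfold pairSaving
  split_ifs with h
  · rw [← Finset.sum_pair h.1]
    exact sum_saving_le_pi_div_two_sub_one (by simp [hi, ho])
      (by rw [Finset.sum_pair h.1]; exact h.2)
  · linarith [saving_le_pi_div_two_sub_one hi]

lemma isCharging_of_long_or_saving :
    C.IsCharging (π / 2 + 1)
      fun i => if 1.86 < C.length i then 0.0161 else π / 2 - 1 - C.saving i := by
  intro U hne hU
  by_cases hlong : ∃ i ∈ U, 1.86 < C.length i
  · obtain ⟨i, hi, hlen⟩ := hlong
    exact ⟨i, hi, by simpa only [if_pos hlen] using sum_erase_saving_le hi hlen hU⟩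
  · push Not at hlong
    obtain ⟨i, hi⟩ := hne
    have := sum_saving_le_pi_div_two_sub_one hlong hU
    rw [← Finset.add_sum_erase U _ hi] at this
    exact ⟨i, hi, by simp only [if_neg (hlong i hi).not_gt]; linarith⟩

lemma DiamLT.two_pi_le_sum_coverage_pairSaving [Fintype ι] {d : ℝ} {o : ι} (hC : C.DiamLT D)
    (hD : 2 ≤ D) (hDd : D ≤ d) (hd : d ≤ π)
    (hpair : Set.Pairwise {o}ᶜ fun i j => D ≤ C.length i + C.length j)
    (ho : ∀ i, C.length o ≤ C.length i) :
    2 * π ≤ ∑ i, C.coverage D d (C.pairSaving D o i) i :=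
  hC.two_pi_le_sum_coverage (isCharging_pairSaving hpair) hD hDd hd (C.pairSaving_nonneg D o)
    fun i => .inl <| (C.pairSaving_le_saving D o i).trans <| (C.saving_le_length o).trans (ho i)

end General

lemma sum_le_four_mul_add {f : Fin 7 → ℝ} {M : ℝ} (h : ∀ i < 4, f i ≤ M) :
    ∑ i, f i ≤ 4 * M + f 4 + f 5 + f 6 := by
  rw [Fin.sum_univ_seven]
  linarith [h 0 (by decide), h 1 (by decide), h 2 (by decide), h 3 (by decide)]

variable {C : ChordFamily (Fin 7)} (hlen : Antitone C.length)
include hlen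

lemma pairwise_le_length_add_length {D : ℝ} (h : D ≤ C.length 4 + C.length 5) :
    Set.Pairwise {6}ᶜ fun i j => D ≤ C.length i + C.length j := by
  intro i (hi : i ≠ 6) j (hj : j ≠ 6) hij
  rcases hij.lt_or_gt with hlt | hlt
  · linarith [hlen (show i ≤ 4 by omega), hlen (show j ≤ 5 by omega)]
  · linarith [hlen (show i ≤ 5 by omega), hlen (show j ≤ 4 by omega)]

/-! ### Four long chords -/

/- The choice of `d` is a trade-off: for `d = π / 2 + 1` every chord counts, but only near its own
middle; for larger `d` the short chords drop out, while almost diameters count twice. -/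
lemma not_diamLT_of_length_four_le (h₄ : C.length 4 ≤ 1.86) : ¬ C.DiamLT (π / 2 + 1) := by
  intro hC
  have hπ₁ := pi_gt_d6
  have hπ₂ := pi_lt_d6
  have hcover := hC.two_pi_le_sum_coverage (d := π) isCharging_of_long_or_saving (by linarith)
    (by linarith) le_rfl ?_ ?_
  · have hlong (i : Fin 7) : C.coverage (π / 2 + 1) π
        (if 1.86 < C.length i then 0.0161 else π / 2 - 1 - C.saving i) i ≤ 1.456 := by
      split_ifs with hi
      · exact (coverage_le_two_mul (by linarith [C.length_le_two i])).trans (by linarith)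
      · exact (coverage_eq_zero le_rfl (by linarith)).trans_le (by norm_num)
    have hshort (i : Fin 7) (hi : 4 ≤ i) : C.coverage (π / 2 + 1) π
        (if 1.86 < C.length i then 0.0161 else π / 2 - 1 - C.saving i) i = 0 := by
      rw [if_neg ((hlen hi).trans h₄).not_gt]
      exact coverage_eq_zero le_rfl (by linarith)
    have hsum := hcover.trans (sum_le_four_mul_add fun i _ => hlong i)
    rw [hshort 4 (by decide), hshort 5 (by decide), hshort 6 (by decide)] at hsum
    linarith
  · intro i
    split_ifs with hi
    · norm_num
    · linarith [saving_le_pi_div_two_sub_one (not_lt.1 hi)]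
  · intro i
    split_ifs with hi
    · exact .inl (by linarith)
    · exact .inr (by linarith)

/-! ### Seven chords of considerable length -/

lemma not_diamLT_of_le_length_five (h₅ : 1.86 ≤ C.length 5) (h₆ : 0.72 ≤ C.length 6) :
    ¬ C.DiamLT (π / 2 + 1) := by
  intro hC
  have hπ₁ := pi_gt_d6
  have hπ₂ := pi_lt_d6
  have h₄ := hlen (show (4 : Fin 7) ≤ 5 by decide)
  have hcover := hC.two_pi_le_sum_coverage_pairSaving (o := 6) (by linarith) le_rfl
    (by linarith) (pairwise_le_length_add_length hlen (by linarith)) fun i => hlen (Fin.le_last i)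
  have hlong (i : Fin 7) (hi : i ≤ 5) :
      C.coverage (π / 2 + 1) (π / 2 + 1) (C.pairSaving (π / 2 + 1) 6 i) i ≤ 0.711 := by
    have := hlen hi
    rw [pairSaving_of_le (by linarith)]
    exact (coverage_le_of_saving_add_le (by linarith [C.length_le_two i])
      (by linarith [C.saving_le_pi_sub_two i])).trans (by linarith)
  have hlast : C.coverage (π / 2 + 1) (π / 2 + 1) (C.pairSaving (π / 2 + 1) 6 6) 6 ≤
      π / 2 + 1 - C.length 6 + 0 := by
    rw [pairSaving_self]
    exact coverage_le_of_saving_add_le (by linarith [C.length_le_two 6])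
      (by linarith [C.saving_le_pi_sub_two 6])
  linarith [sum_le_four_mul_add fun i hi => hlong i (by omega), hlong 4 (by decide),
    hlong 5 (by decide)]

section

variable (h₅ : C.length 5 ≤ 1.86) (h₆ : 0.72 ≤ C.length 6)
include h₅ h₆

lemma not_diamLT_of_length_four_le_of_le_length_six (h₄ : 1.86 < C.length 4)
    (h₄' : C.length 4 ≤ 1.88) : ¬ C.DiamLT (π / 2 + 1) := by
  intro hC
  have hπ₁ := pi_gt_d6
  have hπ₂ := pi_lt_d6
  have h₅₆ := hlen (show (5 : Fin 7) ≤ 6 by decide)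
  have hcover := hC.two_pi_le_sum_coverage_pairSaving (o := 6) (d := π) (by linarith)
    (by linarith) le_rfl (pairwise_le_length_add_length hlen (by linarith))
    fun i => hlen (Fin.le_last i)
  have hlong (i : Fin 7) (hi : i < 4) :
      C.coverage (π / 2 + 1) π (C.pairSaving (π / 2 + 1) 6 i) i ≤ 1.3816 := by
    have := hlen hi.le
    rw [pairSaving_of_le (by linarith)]
    exact coverage_le_of_threshold 0.3464 (by linarith [C.length_le_two i]) (by linarith)
      (fun _ => by linarith) (by linarith)
  have hfour : C.coverage (π / 2 + 1) π (C.pairSaving (π / 2 + 1) 6 4) 4 ≤ 0.711 := by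
    rw [pairSaving_of_le (by linarith)]
    have hs := C.saving_le_of_length_le (i := 4) (r := 0.3464) (by linarith)
    exact (coverage_le_of_saving_add_le (by linarith) (by linarith)).trans (by linarith)
  have hfive := coverage_eq_zero (C := C) (D := π / 2 + 1) (ρ := C.pairSaving (π / 2 + 1) 6 5)
    (i := 5) le_rfl (by linarith [saving_add_pairSaving_le h₅ (h₅₆.trans h₅)])
  have hsix := coverage_eq_zero (C := C) (D := π / 2 + 1) (ρ := C.pairSaving (π / 2 + 1) 6 6)
    (i := 6) le_rfl (by
      rw [pairSaving_self]
      linarith [saving_le_pi_div_two_sub_one (h₅₆.trans h₅)])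
  linarith [sum_le_four_mul_add hlong]

lemma not_diamLT_of_lt_length_add_length (h₄ : 1.88 ≤ C.length 4)
    (h₅₆ : 2.3125 < C.length 5 + C.length 6 - C.pairSaving (π / 2 + 1) 6 5) :
    ¬ C.DiamLT (π / 2 + 1) := by
  intro hC
  have hπ₁ := pi_gt_d6
  have hπ₂ := pi_lt_d6
  have hle := hlen (show (5 : Fin 7) ≤ 6 by decide)
  have hpos := C.pairSaving_nonneg (π / 2 + 1) 6 5
  have hcover := hC.two_pi_le_sum_coverage_pairSaving (o := 6) (by linarith) le_rfl
    (by linarith) (pairwise_le_length_add_length hlen (by linarith)) fun i => hlen (Fin.le_last i)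
  have hlong (i : Fin 7) (hi : i ≤ 4) :
      C.coverage (π / 2 + 1) (π / 2 + 1) (C.pairSaving (π / 2 + 1) 6 i) i ≤ 0.6908 := by
    have := hlen hi
    rw [pairSaving_of_le (by linarith)]
    exact (coverage_le_of_saving_add_le (by linarith [C.length_le_two i])
      (by linarith [C.saving_le_pi_sub_two i])).trans (by linarith)
  have hfive := coverage_le_of_saving_add_le (C := C) (i := 5) (D := π / 2 + 1) (d := π / 2 + 1)
    (ρ := C.pairSaving (π / 2 + 1) 6 5) (by linarith)
    (by linarith [saving_add_pairSaving_le h₅ (hle.trans h₅)])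
  have hsix : C.coverage (π / 2 + 1) (π / 2 + 1) (C.pairSaving (π / 2 + 1) 6 6) 6 ≤
      π / 2 + 1 - C.length 6 + 0 := by
    rw [pairSaving_self]
    exact coverage_le_of_saving_add_le (by linarith) (by linarith [C.saving_le_pi_sub_two 6])
  linarith [sum_le_four_mul_add fun i hi => hlong i hi.le, hlong 4 le_rfl]

end

omit hlen in
lemma saving_add_saving_le (hle : C.length 6 ≤ C.length 5) (h₆ : 0.72 ≤ C.length 6)
    (h₅₆ : C.length 5 + C.length 6 < π / 2 + 1)
    (h : C.length 5 + C.length 6 - C.saving 6 ≤ 2.3125) :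
    C.saving 5 + C.saving 6 ≤ 0.3617 := by
  have hπ₂ := pi_lt_d6
  by_cases h₆' : C.length 6 ≤ 1
  · have hs₆ := C.saving_le_mul_length (i := 6) (Θ := 0.526) (k := 0.0484) (by norm_num)
      (by norm_num) (by linarith) (by norm_num)
    have hs₅ := C.saving_le_of_length_le (i := 5) (r := 0.586) (by linarith)
    linarith
  · have hs₆ := C.saving_le_mul_length (i := 6) (Θ := 0.7) (k := 0.089) (by norm_num)
      (by norm_num) (by linarith) (by norm_num)
    have hs₅ := C.saving_le_of_length_le (i := 5) (r := 0.7735) (by linarith)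
    linarith

lemma not_diamLT_of_length_add_length_le (h₄ : 1.88 ≤ C.length 4) (h₆ : 0.72 ≤ C.length 6)
    (h₅₆ : C.length 5 + C.length 6 < π / 2 + 1)
    (h : C.length 5 + C.length 6 - C.saving 6 ≤ 2.3125) : ¬ C.DiamLT (π / 2 + 1) := by
  intro hC
  have hπ₁ := pi_gt_d6
  have hπ₂ := pi_lt_d6
  have hle := hlen (show (5 : Fin 7) ≤ 6 by decide)
  have hs := saving_add_saving_le hle h₆ h₅₆ h
  have hcover := hC.two_pi_le_sum_coverage_pairSaving (o := 6) (d := π - 0.209) (by linarith)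
    (by linarith) (by linarith) (pairwise_le_length_add_length hlen (by linarith))
    fun i => hlen (Fin.le_last i)
  have hlong (i : Fin 7) (hi : i ≤ 4) :
      C.coverage (π / 2 + 1) (π - 0.209) (C.pairSaving (π / 2 + 1) 6 i) i ≤ 1.2226 := by
    have := hlen hi
    rw [pairSaving_of_le (by linarith)]
    exact coverage_le_of_threshold 0.2012 (by linarith [C.length_le_two i]) (by linarith)
      (fun _ => by linarith) (by linarith)
  have hfive := coverage_eq_zero (C := C) (D := π / 2 + 1) (d := π - 0.209) (i := 5)
    (ρ := C.pairSaving (π / 2 + 1) 6 5) (by linarith)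
    (by linarith [C.pairSaving_le_saving (π / 2 + 1) 6 5])
  have hsix := coverage_eq_zero (C := C) (D := π / 2 + 1) (d := π - 0.209)
    (ρ := C.pairSaving (π / 2 + 1) 6 6) (i := 6) (by linarith) (by
      rw [pairSaving_self]
      linarith [C.saving_nonneg 5])
  linarith [sum_le_four_mul_add fun i hi => hlong i hi.le, hlong 4 le_rfl]

/-! ### Six long chords and a short one -/

lemma DiamLT.two_pi_le_of_length_four_le {r M : ℝ} (hC : C.DiamLT (π / 2 + 1))
    (h₄₅ : π / 2 + 1 ≤ C.length 4 + C.length 5) (h₄ : C.length 4 ≤ 2 - r ^ 2)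
    (h₆ : C.length 6 ≤ 1.86) (hr : r ^ 2 + 2 * C.saving 6 ≤ 2 * r)
    (hlong : ∀ i < 4, 2 - r ^ 2 < C.length i →
      2 * (π / 2 + 1 - C.length i + C.pairSaving (π / 2 + 1) 6 i) ≤ M)
    (hM : ∀ i < 4, π / 2 + 1 - C.length i + C.saving 6 ≤ M) :
    2 * π ≤ 4 * M + (π / 2 + 1 - C.length 4 + C.saving 6) +
      (π / 2 + 1 - C.length 5 + C.saving 6) := by
  have hπ := pi_gt_d6
  have hcover := hC.two_pi_le_sum_coverage_pairSaving (o := 6) (d := π / 2 + 1 + C.saving 6)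
    (by linarith) (by linarith [C.saving_nonneg 6])
    (by linarith [saving_le_pi_div_two_sub_one h₆]) (pairwise_le_length_add_length hlen h₄₅)
    fun i => hlen (Fin.le_last i)
  have hρ₀ (i : Fin 7) : 0 ≤ π / 2 + 1 - C.length i + C.pairSaving (π / 2 + 1) 6 i := by
    linarith [C.length_le_two i, C.pairSaving_nonneg (π / 2 + 1) 6 i]
  have hρ (i : Fin 7) := C.pairSaving_le_saving (π / 2 + 1) 6 i
  have hfirst (i : Fin 7) (hi : i < 4) : C.coverage (π / 2 + 1) (π / 2 + 1 + C.saving 6)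
      (C.pairSaving (π / 2 + 1) 6 i) i ≤ M :=
    coverage_le_of_threshold r (hρ₀ i) (by linarith [hρ i]) (hlong i hi)
      (by linarith [hρ i, hM i hi])
  have hmiddle (i : Fin 7) (hi : 4 ≤ i) : C.coverage (π / 2 + 1) (π / 2 + 1 + C.saving 6)
      (C.pairSaving (π / 2 + 1) 6 i) i ≤ π / 2 + 1 - C.length i + C.saving 6 :=
    coverage_le_of_threshold r (hρ₀ i) (by linarith [hρ i])
      (fun h => absurd ((hlen hi).trans h₄) h.not_ge) (by linarith [hρ i])
  have hlast : C.coverage (π / 2 + 1) (π / 2 + 1 + C.saving 6)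
      (C.pairSaving (π / 2 + 1) 6 6) 6 = 0 :=
    coverage_eq_zero (by linarith [saving_le_pi_div_two_sub_one h₆]) (by rw [pairSaving_self]; simp)
  linarith [sum_le_four_mul_add hfirst, hmiddle 4 le_rfl, hmiddle 5 (by decide)]

lemma DiamLT.two_pi_le_sum_of_length_add_saving_le {r : ℝ} (hC : C.DiamLT (π / 2 + 1))
    (h₄₅ : π / 2 + 1 ≤ C.length 4 + C.length 5) (hr : r ^ 2 + 2 * C.saving 6 ≤ 2 * r)
    (h₅₆ : C.length 6 + C.saving 6 + r ^ 2 ≤ C.length 5) :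
    2 * π ≤ ∑ i, (π / 2 + 1 - C.length i + C.saving 6 + r ^ 2) := by
  have hs := C.saving_nonneg 6
  have hle (i : Fin 7) (hi : i ≠ 6) : C.length 5 ≤ C.length i := hlen (by omega)
  refine hC.two_pi_le_sum_of_saving_le_length (o := 6) (g := π / 2 - 1 + r ^ 2 + C.saving 6 / 2)
    (by linarith [pi_gt_d6]) le_rfl (pairwise_le_length_add_length hlen h₄₅)
    (fun i => (C.saving_le_length 6).trans (hlen (Fin.le_last i))) ?_ ?_ ?_ ?_
  · intro i _ _ hsaving
    rcases le_total (C.length i) (2 - r ^ 2) with hi | hi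
    · linarith [saving_le_of_length_le hi]
    · linarith
  · intro i
    linarith [C.pairSaving_le_saving (π / 2 + 1) 6 i, sq_nonneg r]
  · intro i _
    linarith [C.length_le_two i]
  · intro i hi
    linarith [hle i hi]

lemma isCharging_const (h₄ : 1.86 < C.length 4) (h₆ : C.saving 6 ≤ 0.0168) :
    C.IsCharging (π / 2 + 1) fun _ => 0.0168 := by
  intro U hne hU
  by_cases hlong : ∃ i ∈ U, i ≤ 4
  · obtain ⟨i, hi, hi₄⟩ := hlong
    exact ⟨i, hi, (sum_erase_saving_le hi (h₄.trans_le (hlen hi₄)) hU).trans (by norm_num)⟩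
  · push Not at hlong
    have hmin := U.min'_mem hne
    refine ⟨U.min' hne, hmin, (Finset.sum_le_sum_of_subset_of_nonneg (t := {6}) ?_
      fun j _ _ => C.saving_nonneg j).trans (by simpa using h₆)⟩
    intro j hj
    have hlt := U.min'_lt_of_mem_erase_min' hne hj
    have := hlong _ hmin
    simp only [Finset.mem_singleton]
    omega

lemma not_diamLT_of_length_five_le (h₄ : 1.86 < C.length 4) (h₅ : C.length 5 ≤ 1.62)
    (h₆ : C.length 6 ≤ 0.72) : ¬ C.DiamLT (π / 2 + 1) := by
  intro hC
  have hπ₁ := pi_gt_d6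
  have hπ₂ := pi_lt_d6
  have hs₅ := C.saving_le_of_length_le (i := 5) (r := 0.616) (by linarith)
  have hs₆ := C.saving_le_mul_length (i := 6) (Θ := 0.3685) (k := 0.0232) (by norm_num)
    (by norm_num) (by linarith) (by norm_num)
  have hs (i : Fin 7) (hi : 5 ≤ i) : C.saving i ≤ 0.2891 := by
    obtain rfl | rfl : i = 5 ∨ i = 6 := by omega
    · linarith
    · linarith
  have hcover := hC.two_pi_le_sum_coverage (d := π - 0.26)
    (isCharging_const hlen h₄ (by linarith)) (by linarith) (by linarith) (by linarith)
    (fun _ => by norm_num) fun i => ?_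
  · have hlong (i : Fin 7) (hi : i ≤ 4) : C.coverage (π / 2 + 1) (π - 0.26) 0.0168 i ≤ 1.24 :=
      coverage_le_of_threshold 0.18 (by linarith [C.length_le_two i]) (by linarith)
        (fun _ => by linarith) (by linarith [hlen hi])
    have hshort (i : Fin 7) (hi : 5 ≤ i) : C.coverage (π / 2 + 1) (π - 0.26) 0.0168 i = 0 :=
      coverage_eq_zero (by linarith) (by linarith [hs i hi])
    linarith [sum_le_four_mul_add fun i hi => hlong i hi.le, hlong 4 le_rfl, hshort 5 le_rfl,
      hshort 6 (by decide)]
  · rcases lt_or_ge i 5 with hi | hi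
    · exact .inl (by linarith [hlen (show i ≤ 4 by omega)])
    · exact .inr (by linarith [hs i hi])

lemma not_diamLT_of_length_five_le_of_length_six_le (h₄ : 1.86 < C.length 4)
    (h₅ : 1.62 ≤ C.length 5) (h₅' : C.length 5 ≤ 1.716) (h₆ : C.length 6 ≤ 0.572) :
    ¬ C.DiamLT (π / 2 + 1) := by
  intro hC
  have hπ₁ := pi_gt_d6
  have hπ₂ := pi_lt_d6
  have hs₅ := C.saving_le_of_length_le (i := 5) (r := 0.5329) (by linarith)
  have hs₆ := C.saving_le_mul_length (i := 6) (Θ := 0.2903) (k := 0.01425) (by norm_num)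
    (by norm_num) (by linarith) (by norm_num)
  have hρ₀ (i : Fin 7) := C.pairSaving_nonneg (π / 2 + 1) 6 i
  have hρ (i : Fin 7) := C.pairSaving_le_saving (π / 2 + 1) 6 i
  have hcover := hC.two_pi_le_sum_coverage_pairSaving (o := 6) (d := π - 0.202) (by linarith)
    (by linarith) (by linarith) (pairwise_le_length_add_length hlen (by linarith))
    fun i => hlen (Fin.le_last i)
  have hlong (i : Fin 7) (hi : i ≤ 4) :
      C.coverage (π / 2 + 1) (π - 0.202) (C.pairSaving (π / 2 + 1) 6 i) i ≤ 1.247 :=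
    coverage_le_of_threshold 0.2107 (by linarith [C.length_le_two i, hρ₀ i]) (by linarith [hρ i])
      (fun _ => by linarith [hρ i]) (by linarith [hlen hi, hρ i])
  have hshort (i : Fin 7) (hi : C.saving i ≤ 0.3598) :
      C.coverage (π / 2 + 1) (π - 0.202) (C.pairSaving (π / 2 + 1) 6 i) i = 0 :=
    coverage_eq_zero (by linarith) (by linarith [hρ i])
  linarith [sum_le_four_mul_add fun i hi => hlong i hi.le, hlong 4 le_rfl,
    hshort 5 (by linarith), hshort 6 (by linarith)]

lemma not_diamLT_of_le_length_six (h₄ : 1.86 < C.length 4) (h₅ : 1.62 ≤ C.length 5)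
    (h₆ : 0.572 ≤ C.length 6) (h₆' : C.length 6 ≤ 0.72) : ¬ C.DiamLT (π / 2 + 1) := by
  intro hC
  have hπ₁ := pi_gt_d6
  have hπ₂ := pi_lt_d6
  have hs₆ := C.saving_le_mul_length (i := 6) (Θ := 0.3685) (k := 0.0232) (by norm_num)
    (by norm_num) (by linarith) (by norm_num)
  have hle {i : Fin 7} (hi : i ≤ 4) := hlen hi
  rcases le_total (C.length 4) (2 - 0.0169 ^ 2) with h | h
  · have := hC.two_pi_le_of_length_four_le hlen (M := 1.1422) (by linarith) h (by linarith)
      (by linarith) (fun i _ hi => by rw [pairSaving_of_le (by linarith)]; linarith)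
      (fun i hi => by linarith [hle hi.le])
    linarith
  · have := hC.two_pi_le_sum_of_length_add_saving_le hlen (r := 0.0169) (by linarith)
      (by linarith) (by linarith)
    rw [Fin.sum_univ_seven] at this
    linarith [hle (i := 0) (by decide), hle (i := 1) (by decide), hle (i := 2) (by decide),
      hle (i := 3) (by decide)]

lemma not_diamLT_of_le_length_five_of_length_six_le (h₄ : 1.86 < C.length 4)
    (h₅ : 1.716 ≤ C.length 5) (h₆ : C.length 6 ≤ 0.572) : ¬ C.DiamLT (π / 2 + 1) := by
  intro hC
  have hπ₁ := pi_gt_d6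
  have hπ₂ := pi_lt_d6
  have hs₆ := C.saving_le_mul_length (i := 6) (Θ := 0.2903) (k := 0.01425) (by norm_num)
    (by norm_num) (by linarith) (by norm_num)
  have hle {i : Fin 7} (hi : i ≤ 4) := hlen hi
  rcases le_total (C.length 4) (2 - 0.0083 ^ 2) with h | h
  · have := hC.two_pi_le_of_length_four_le hlen (M := 1.1582) (by linarith) h (by linarith)
      (by linarith)
      (fun i _ hi => by linarith [C.pairSaving_le_saving (π / 2 + 1) 6 i])
      (fun i hi => by linarith [hle hi.le])
    linarith
  · have := hC.two_pi_le_sum_of_length_add_saving_le hlen (r := 0.0083) (by linarith)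
      (by linarith) (by linarith)
    rw [Fin.sum_univ_seven] at this
    linarith [hle (i := 0) (by decide), hle (i := 1) (by decide), hle (i := 2) (by decide),
      hle (i := 3) (by decide), C.length_nonneg 6]

/-! ### Case distinction -/

lemma not_diamLT_of_length_six_le (h₄ : 1.86 < C.length 4) (h₆ : C.length 6 ≤ 0.72) :
    ¬ C.DiamLT (π / 2 + 1) := by
  rcases le_total (C.length 5) 1.62 with h₅ | h₅
  · exact not_diamLT_of_length_five_le hlen h₄ h₅ h₆
  rcases le_total 0.572 (C.length 6) with h₆' | h₆'
  · exact not_diamLT_of_le_length_six hlen h₄ h₅ h₆' h₆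
  rcases le_total (C.length 5) 1.716 with h₅' | h₅'
  · exact not_diamLT_of_length_five_le_of_length_six_le hlen h₄ h₅ h₅' h₆'
  · exact not_diamLT_of_le_length_five_of_length_six_le hlen h₄ h₅' h₆'

lemma not_diamLT_of_length_five_le_of_le_length_six (h₄ : 1.88 ≤ C.length 4)
    (h₅ : C.length 5 ≤ 1.86) (h₆ : 0.72 ≤ C.length 6) : ¬ C.DiamLT (π / 2 + 1) := by
  by_cases h₅₆ : C.length 5 + C.length 6 < π / 2 + 1
  · have hpair : C.pairSaving (π / 2 + 1) 6 5 = C.saving 6 := if_pos ⟨by decide, h₅₆⟩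
    rcases le_or_gt (C.length 5 + C.length 6 - C.saving 6) 2.3125 with h | h
    · exact not_diamLT_of_length_add_length_le hlen h₄ h₆ h₅₆ h
    · exact not_diamLT_of_lt_length_add_length hlen h₅ h₆ h₄ (by rwa [hpair])
  · rw [not_lt] at h₅₆
    refine not_diamLT_of_lt_length_add_length hlen h₅ h₆ h₄ ?_
    rw [pairSaving_of_le h₅₆]
    linarith [pi_gt_d6]

theorem not_diamLT_pi_div_two_add_one : ¬ C.DiamLT (π / 2 + 1) := by
  rcases le_or_gt (C.length 4) 1.86 with h₄ | h₄
  · exact not_diamLT_of_length_four_le hlen h₄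
  rcases le_total (C.length 6) 0.72 with h₆ | h₆
  · exact not_diamLT_of_length_six_le hlen h₄ h₆
  rcases le_total 1.86 (C.length 5) with h₅ | h₅
  · exact not_diamLT_of_le_length_five hlen h₅ h₆
  rcases le_total (C.length 4) 1.88 with h₄' | h₄'
  · exact not_diamLT_of_length_four_le_of_le_length_six hlen h₅ h₆ h₄ h₄'
  · exact not_diamLT_of_length_five_le_of_le_length_six hlen h₄' h₅ h₆

end ChordFamily

/-! ## From finite sets of shortcuts to families of chords -/

section Distance

variable {S : Finset (ℝ × ℝ)}

lemma dS_le_walkCost (p q : ℝ) {L : List (ℝ × ℝ)} (hL : ∀ e ∈ L, e ∈ S ∨ (e.2, e.1) ∈ S) :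
    dS S p q ≤ walkCost q p L := by
  refine csInf_le ⟨0, ?_⟩ ⟨L, hL, rfl⟩
  rintro _ ⟨L', _, rfl⟩
  exact walkCost_nonneg p q L'

lemma dS_le_arcDist (p q : ℝ) : dS S p q ≤ arcDist p q :=
  dS_le_walkCost p q (L := []) (by simp)

lemma dS_le_diamS (p q : ℝ) : dS S p q ≤ diamS S := by
  refine le_csSup ⟨π, ?_⟩ ⟨p, q, rfl⟩
  rintro _ ⟨p', q', rfl⟩
  exact (dS_le_arcDist p' q').trans (arcDist_le_pi p' q')

lemma exists_walkCost_lt_of_diamS_lt {D : ℝ} (hS : diamS S < D) (p q : ℝ) :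
    ∃ L : List (ℝ × ℝ), (∀ e ∈ L, e ∈ S ∨ (e.2, e.1) ∈ S) ∧ walkCost q p L < D := by
  obtain ⟨_, ⟨L, hL, rfl⟩, hlt⟩ := exists_lt_of_csInf_lt
    (s := {c | ∃ L : List (ℝ × ℝ), (∀ e ∈ L, e ∈ S ∨ (e.2, e.1) ∈ S) ∧ c = walkCost q p L})
    ⟨_, [], by simp, rfl⟩ ((dS_le_diamS p q).trans_lt hS)
  exact ⟨L, hL, hlt⟩

end Distance

lemma exists_antitone_chordLen {S : Finset (ℝ × ℝ)} {n : ℕ} (hS : S.card ≤ n) :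
    ∃ s : Fin n → ℝ × ℝ, (Antitone fun i => chordLen (s i).1 (s i).2) ∧
      ∀ e ∈ S, ∃ i, s i = e := by
  obtain ⟨g⟩ := Function.Embedding.nonempty_of_card_le (α := S) (β := Fin n) (by simpa using hS)
  let f : Fin n → ℝ × ℝ := Function.extend g Subtype.val 0
  let a i := -chordLen (f i).1 (f i).2
  let σ := Tuple.sort a
  refine ⟨f ∘ σ, fun i j hij => neg_le_neg_iff.1 (Tuple.monotone_sort a hij), fun e he => ?_⟩
  exact ⟨σ.symm (g ⟨e, he⟩), by simp [f, g.injective.extend_apply]⟩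

lemma exists_sameChord_sub_add (s : ℝ × ℝ) :
    ∃ m, SameChord s (m - arcDist s.1 s.2 / 2, m + arcDist s.1 s.2 / 2) := by
  obtain ⟨n, hn⟩ := exists_int_arcDist_eq s.1 s.2
  rcases le_total (s.1 - s.2 + 2 * π * n) 0 with h | h
  · rw [abs_of_nonpos h] at hn
    exact ⟨s.1 + arcDist s.1 s.2 / 2, .inl ⟨samePoint_of_eq_add 0 (by simp),
      samePoint_of_eq_add n (by simp only; linarith)⟩⟩
  · rw [abs_of_nonneg h] at hn
    exact ⟨s.2 + arcDist s.1 s.2 / 2, .inr ⟨samePoint_of_eq_add (-n) (by push_cast; linarith),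
      samePoint_of_eq_add 0 (by simp)⟩⟩

lemma SameChord.swap {s t : ℝ × ℝ} (h : SameChord s t) : SameChord (s.2, s.1) t :=
  h.symm.imp And.symm And.symm

lemma SameChord.chordLen_eq {s t : ℝ × ℝ} (h : SameChord s t) :
    chordLen s.1 s.2 = chordLen t.1 t.2 := by
  unfold chordLen
  rcases h with ⟨h₁, h₂⟩ | ⟨h₁, h₂⟩
  · rw [h₁.arcDist_left, h₂.arcDist_right]
  · rw [h₁.arcDist_left, h₂.arcDist_right, arcDist_comm]

lemma SamePoint.walkCost_eq {p p' : ℝ} (h : SamePoint p p') (q : ℝ) (L : List (ℝ × ℝ)) :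
    walkCost q p L = walkCost q p' L := by
  cases L <;> simp only [walkCost, h.arcDist_left]

namespace ChordFamily

variable {ι : Type*}

lemma exists_forall_sameChord (s : ι → ℝ × ℝ) :
    ∃ C : ChordFamily ι, ∀ i, SameChord (s i) (C.left i, C.right i) := by
  choose m hm using fun i => exists_sameChord_sub_add (s i)
  exact ⟨⟨m, fun i => arcDist (s i).1 (s i).2 / 2,
    fun i => by linarith [arcDist_nonneg (s i).1 (s i).2],
    fun i => by linarith [arcDist_le_pi (s i).1 (s i).2]⟩, hm⟩

variable {C : ChordFamily ι}

lemma exists_walkCost_map_edge_eq (q : ℝ) {L : List (ℝ × ℝ)}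
    (hL : ∀ e ∈ L, ∃ i, SameChord e (C.left i, C.right i)) (p : ℝ) :
    ∃ L' : List (ι × Bool), walkCost q p (L'.map C.edge) = walkCost q p L := by
  induction L generalizing p with
  | nil => exact ⟨[], rfl⟩
  | cons e L ih =>
    obtain ⟨⟨i, hi⟩, hL⟩ := List.forall_mem_cons.1 hL
    obtain ⟨L', hL'⟩ := ih hL e.2
    obtain ⟨b, h₁, h₂⟩ : ∃ b, SamePoint e.1 (C.edge (i, b)).1 ∧ SamePoint e.2 (C.edge (i, b)).2 :=
      hi.elim (fun h => ⟨true, h⟩) fun h => ⟨false, h⟩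
    refine ⟨(i, b) :: L', ?_⟩
    rw [List.map_cons, walkCost, walkCost, ← hL', h₁.arcDist_right, h₂.walkCost_eq,
      SameChord.chordLen_eq (t := C.edge (i, b)) (.inl ⟨h₁, h₂⟩)]

end ChordFamily

theorem pi_div_two_add_one_le_diamS {S : Finset (ℝ × ℝ)} (hS : S.card ≤ 7) :
    π / 2 + 1 ≤ diamS S := by
  by_contra! hlt
  obtain ⟨s, hanti, hs⟩ := exists_antitone_chordLen hS
  obtain ⟨C, hC⟩ := ChordFamily.exists_forall_sameChord s
  have hlen (i : Fin 7) : chordLen (s i).1 (s i).2 = C.length i :=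
    (hC i).chordLen_eq.trans (C.chordLen_edge (i, true))
  simp only [hlen] at hanti
  refine ChordFamily.not_diamLT_pi_div_two_add_one hanti fun p q => ?_
  obtain ⟨L, hL, hcost⟩ := exists_walkCost_lt_of_diamS_lt hlt p q
  have hmem (e) (he : e ∈ L) : ∃ i, SameChord e (C.left i, C.right i) := by
    rcases hL e he with he | he
    · obtain ⟨i, rfl⟩ := hs e he
      exact ⟨i, hC i⟩
    · obtain ⟨i, hi⟩ := hs _ he
      exact ⟨i, (hi ▸ hC i).swap⟩
  obtain ⟨L', hL'⟩ := ChordFamily.exists_walkCost_map_edge_eq q hmem p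
  exact ⟨L', hL'.trans_lt hcost⟩

/-! ## Equally spaced diameters -/

lemma dS_le_of_sameChord {S : Finset (ℝ × ℝ)} {e s : ℝ × ℝ} (he : e ∈ S) (h : SameChord e s)
    (p q : ℝ) : dS S p q ≤ arcDist p s.1 + chordLen s.1 s.2 + arcDist s.2 q := by
  rw [← h.chordLen_eq]
  rcases h with ⟨h₁, h₂⟩ | ⟨h₁, h₂⟩
  · have := dS_le_walkCost p q (L := [e]) (by simpa using .inl he)
    rwa [walkCost, walkCost, h₁.arcDist_right, h₂.arcDist_left] at this
  · have := dS_le_walkCost p q (L := [(e.2, e.1)]) (by simpa using .inr he)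
    rwa [walkCost, walkCost, h₁.arcDist_left, h₂.arcDist_right, chordLen_comm] at this

lemma arcDist_add_pi (x : ℝ) : arcDist x (x + π) = π := by
  have h : |x - (x + π)| = π := by rw [sub_add_cancel_left, abs_neg, abs_of_pos pi_pos]
  rw [arcDist_eq_abs_sub h.le, h]

lemma chordLen_add_pi (x : ℝ) : chordLen x (x + π) = 2 := by
  rw [chordLen, arcDist_add_pi, sin_pi_div_two, mul_one]

lemma exists_samePoint_add_pi_add (p q : ℝ) :
    ∃ t, |t| = π - arcDist p q ∧ SamePoint q (p + π + t) := by
  obtain ⟨n, hn⟩ := exists_int_arcDist_eq p q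
  have hpi := arcDist_le_pi p q
  rcases le_total (p - q + 2 * π * n) 0 with h | h
  · rw [abs_of_nonpos h] at hn
    exact ⟨arcDist p q - π, by rw [abs_of_nonpos (by linarith), neg_sub],
      samePoint_of_eq_add n (by linarith)⟩
  · rw [abs_of_nonneg h] at hn
    exact ⟨π - arcDist p q, abs_of_nonneg (by linarith),
      samePoint_of_eq_add (n - 1) (by push_cast; linarith)⟩

/-- The `n` equally spaced diameters, one of them starting at the angle `0`. -/
noncomputable def diameters (n : ℕ) : Finset (ℝ × ℝ) :=
  (Finset.range n).image fun j : ℕ => (j * π / n, j * π / n + π)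

section Diameters

variable {n : ℕ}

lemma isShortcut_of_mem_diameters {s : ℝ × ℝ} (hs : s ∈ diameters n) : IsShortcut s := by
  obtain ⟨j, _, rfl⟩ := Finset.mem_image.1 hs
  exact (arcDist_add_pi _).trans_ne pi_ne_zero

lemma card_diameters : (diameters n).card = n := by
  rw [diameters, Finset.card_image_of_injOn, Finset.card_range]
  intro i hi j _ hij
  have hn : (n : ℝ) ≠ 0 := by
    rintro h
    simp [Nat.cast_eq_zero.1 h] at hi
  have := congrArg Prod.fst hij
  simpa [div_left_inj' hn, pi_ne_zero] using this

lemma exists_mem_diameters_sameChord (hn : n ≠ 0) (k : ℤ) :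
    ∃ e ∈ diameters n, SameChord e (k * π / n, k * π / n + π) := by
  have hn' : (n : ℝ) ≠ 0 := Nat.cast_ne_zero.2 hn
  have hnz : (n : ℤ) ≠ 0 := Nat.cast_ne_zero.2 hn
  obtain ⟨j, hj⟩ := Int.eq_ofNat_of_zero_le (k.emod_nonneg hnz)
  have hjn : j < n := by
    have := Int.emod_lt_of_pos k (Int.natCast_pos.2 hn.bot_lt)
    omega
  refine ⟨_, Finset.mem_image_of_mem _ (Finset.mem_range.2 hjn), ?_⟩
  have hk : (k : ℝ) * π / n = (k / n : ℤ) * π + j * π / n := by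
    have : (k : ℝ) = n * (k / n : ℤ) + j := by
      rw [← Int.cast_natCast j, ← Int.ofNat_eq_natCast, ← hj]
      exact_mod_cast (Int.mul_ediv_add_emod k n).symm
    rw [this]
    field_simp
  rcases Int.even_or_odd' (k / n) with ⟨m, hm | hm⟩ <;> rw [hk, hm] <;> push_cast
  · exact .inl ⟨samePoint_of_eq_add (-m) (by push_cast; ring),
      samePoint_of_eq_add (-m) (by push_cast; ring)⟩
  · exact .inr ⟨samePoint_of_eq_add (-m - 1) (by push_cast; ring),
      samePoint_of_eq_add (-m) (by push_cast; ring)⟩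

lemma abs_add_abs_add_le (x t : ℝ) : |x| + |x + t| ≤ max |2 * x + t| |t| := by
  rcases abs_cases x with ⟨h₁, _⟩ | ⟨h₁, _⟩ <;> rcases abs_cases (x + t) with ⟨h₂, _⟩ | ⟨h₂, _⟩
  · exact le_max_of_le_left ((le_abs_self _).trans' (by linarith))
  · exact le_max_of_le_right ((neg_le_abs _).trans' (by linarith))
  · exact le_max_of_le_right ((le_abs_self _).trans' (by linarith))
  · exact le_max_of_le_left ((neg_le_abs _).trans' (by linarith))

lemma exists_int_abs_sub_mul_le {a : ℝ} (ha : 0 < a) (x : ℝ) : ∃ k : ℤ, |x - k * a| ≤ a / 2 := by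
  refine ⟨round (a⁻¹ * x), ?_⟩
  rw [← AddCircle.norm_eq]
  exact (AddCircle.norm_le_half_period a ha.ne').trans_eq (by rw [abs_of_pos ha])

lemma dS_diameters_le (hn : 6 ≤ n) (p q : ℝ) : dS (diameters n) p q ≤ π / 2 + 1 := by
  by_cases hle : arcDist p q ≤ π / 2 + 1
  · exact (dS_le_arcDist p q).trans hle
  obtain ⟨t, ht, hq⟩ := exists_samePoint_add_pi_add p q
  have hn₀ : n ≠ 0 := by omega
  obtain ⟨k, hk⟩ := exists_int_abs_sub_mul_le (a := 2 * π / n) (by positivity) (2 * p + t)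
  obtain ⟨e, he, hchord⟩ := exists_mem_diameters_sameChord hn₀ k
  set c := k * π / n with hc
  have hdetour : |p - c| + |p - c + t| ≤ π / 2 - 1 := by
    refine (abs_add_abs_add_le _ t).trans (max_le ?_ (by linarith))
    calc |2 * (p - c) + t| = |2 * p + t - k * (2 * π / n)| := by rw [hc]; ring_nf
      _ ≤ 2 * π / n / 2 := hk
      _ = π / n := by ring
      _ ≤ π / 6 := by gcongr; exact_mod_cast hn
      _ ≤ π / 2 - 1 := by linarith [pi_gt_d6]
  calc dS (diameters n) p q ≤ arcDist p c + 2 + arcDist (c + π) (p + π + t) := by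
        rw [← chordLen_add_pi c, ← hq.arcDist_right]
        exact dS_le_of_sameChord he hchord p q
    _ ≤ |p - c| + 2 + |p - c + t| := by
        gcongr
        · exact arcDist_le_abs_sub p c
        · rw [arcDist_comm]
          exact (arcDist_le_abs_sub _ _).trans_eq (congrArg abs (by ring))
    _ ≤ π / 2 + 1 := by linarith

end Diameters

theorem diamK_eq_pi_div_two_add_one {n : ℕ} (hn₆ : 6 ≤ n) (hn₇ : n ≤ 7) :
    diamK n = π / 2 + 1 := by
  have hmin : π / 2 + 1 ∈ lowerBounds
      {d | ∃ S : Finset (ℝ × ℝ), S.card = n ∧ (∀ s ∈ S, IsShortcut s) ∧ d = diamS S} := by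
    rintro _ ⟨S, hS, _, rfl⟩
    exact pi_div_two_add_one_le_diamS (hS.trans_le hn₇)
  have hdiam : diamS (diameters n) = π / 2 + 1 := by
    refine le_antisymm (csSup_le ⟨_, 0, 0, rfl⟩ ?_)
      (pi_div_two_add_one_le_diamS (card_diameters.trans_le hn₇))
    rintro _ ⟨p, q, rfl⟩
    exact dS_diameters_le hn₆ p q
  exact IsLeast.csInf_eq ⟨⟨diameters n, card_diameters, fun _ => isShortcut_of_mem_diameters,
    hdiam.symm⟩, hmin⟩

/-- no configuration of at most seven shortcuts achieves diameter smaller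
than `π/2 + 1`; consequently `diam(7) = diam(6) = π/2 + 1`. -/
theorem stmt4 :
    (∀ S : Finset (ℝ × ℝ), S.card ≤ 7 → (∀ s ∈ S, IsShortcut s) →
      π / 2 + 1 ≤ diamS S) ∧
    diamK 7 = π / 2 + 1 ∧ diamK 6 = π / 2 + 1 :=
  ⟨fun _ hS _ => pi_div_two_add_one_le_diamS hS,
    diamK_eq_pi_div_two_add_one (by norm_num) le_rfl,
    diamK_eq_pi_div_two_add_one le_rfl (by norm_num)⟩
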